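/- Let m > 2, 1 ≤ n ≤ m, and 0 < 2α_j < 1 for j = 1,…,n; set α = α_1+…+α_n, β = (m−2)/2 + α, and γ = 2^{2β−m} Γ(β) π^{−m/2} ∏_{j=1}^n Γ(α_j)/Γ(2α_j). Fix k with 1 ≤ k ≤ n, and let ν_k be a continuous function on S_k = {x̃_k = (x_1,…,x_{k−1},x_{k+1},…,x_m) : x_i > 0 for i ≤ n, i ≠ k} satisfying |ν_k(x̃_k)| ≤ c_k (1 + Σ_{i≠k} x_i²)^{−(1−2α_k+ε_k)/2} for some constants c_k > 0 and ε_k > 0. Define, for ξ ∈ ℝ^m with ξ_1 > 0, …, ξ_n > 0, I_k(ξ) = −γ ∫_{S_k} ν_k(x̃_k) · [∏_{j≤n, j≠k} x_j^{2α_j}] · r_k^{−2β} · F_A^{(n−1)}(β, (α_j)_{j≤n, j≠k}; (2α_j)_{j≤n, j≠k}; (−4x_jξ_j/r_k²)_{j≤n, j≠k}) dx̃_k, where r_k² = ξ_k² + Σ_{i≠k} (x_i − ξ_i)². Then for every fixed ξ̃_k with positive coordinates ξ_i > 0 (i ≤ n, i ≠ k), one has lim_{ξ_k→0+} ξ_k^{2α_k}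 ∂I_k/∂ξ_k = ν_k(ξ̃_k). -/

import Mathlib

open MeasureTheory Real Filter Topology

/-- The Lauricella function `F_A` (in finitely many variables indexed by `ι`) defined
through its Euler-type integral representation. -/
noncomputable def lauricellaFA {ι : Type*} [Fintype ι] (a : ℝ) (b c x : ι → ℝ) : ℝ :=
  (∏ i, Real.Gamma (c i) / (Real.Gamma (b i) * Real.Gamma (c i - b i))) *
    ∫ u in Set.univ.pi (fun _ : ι => Set.Icc (0 : ℝ) 1),
      (∏ i, u i ^ (b i - 1) * (1 - u i) ^ (c i - b i - 1)) * (1 - ∑ i, x i * u i) ^ (-a)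

/-!
Inserting the Euler integral of the Lauricella function turns the potential at distance `s` from its
face into a multiple of the integral of
`ν(y) ∏ y_j ^ (2 α_j) u^(α-1) (1-u)^(α-1) (s² + |y - x|² + 4 ∑ y_j x_j u_j) ^ (-β)`
over the points `y` of the face and `u` of the unit cube. Differentiating in `s` raises the exponent
to `-(β + 1)` and produces the factor `-2 β s`. The resulting kernel concentrates at
`(y, u) = (x, 0)`: in the parabolic coordinates `(y, u) = (x + s z, s² v)` its homogeneity absorbs
`s ^ (2 α_k)`, and dominated convergence leaves `ν(x) ∏ x_j ^ (2 α_j)` times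
`∫ ∏ v_j ^ (α_j - 1) (1 + |z|² + 4 ∑ x_j² v_j) ^ (-(β + 1))`. Writing the power as a Laplace
integral splits this into Gaussian and Gamma integrals, and the duplication formula for `Γ(α_k)`
shows that the limit is `ν(x)` for the normalization `γ`.
-/

section LaplaceTransform

lemma integrableOn_rpow_mul_exp_neg_mul {a q : ℝ} (ha : 0 < a) (hq : 0 < q) :
    IntegrableOn (fun t : ℝ => t ^ (a - 1) * exp (-(q * t))) (Set.Ioi 0) := by
  simpa only [rpow_one, neg_mul] using
    integrableOn_rpow_mul_exp_neg_mul_rpow (show -1 < a - 1 by linarith) one_pos hq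

lemma integral_Ioi_rpow_mul_exp_neg_mul {a q : ℝ} (ha : 0 < a) (hq : 0 < q) :
    ∫ t in Set.Ioi (0 : ℝ), t ^ (a - 1) * exp (-(q * t)) = q ^ (-a) * Gamma a := by
  rw [integral_rpow_mul_exp_neg_mul_Ioi ha hq, one_div, inv_rpow hq.le, rpow_neg hq.le]

lemma integral_Ioi_rpow_mul_mul_exp_neg_mul (w : ℝ) {a q : ℝ} (ha : 0 < a) (hq : 0 < q) :
    ∫ t in Set.Ioi (0 : ℝ), t ^ (a - 1) * (w * exp (-(q * t))) = Gamma a * (w * q ^ (-a)) := by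
  simp_rw [mul_left_comm _ w]
  rw [integral_const_mul, integral_Ioi_rpow_mul_exp_neg_mul ha hq]
  ring

variable {Ω : Type*} [MeasurableSpace Ω] {μ : Measure Ω} {w A : Ω → ℝ} {r : ℝ}

lemma integrable_prod_rpow_mul_mul_exp_neg_mul [SFinite μ] (hwm : AEStronglyMeasurable w μ)
    (hAm : AEStronglyMeasurable A μ) (hw : ∀ᵐ p ∂μ, 0 ≤ w p)
    (hslice : ∀ t, 0 < t → Integrable (fun p => w p * exp (-(A p * t))) μ)
    (hL : IntegrableOn (fun t => t ^ (r - 1) * ∫ p, w p * exp (-(A p * t)) ∂μ) (Set.Ioi 0)) :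
    Integrable (fun z : ℝ × Ω => z.1 ^ (r - 1) * (w z.2 * exp (-(A z.2 * z.1))))
      ((volume.restrict (Set.Ioi 0)).prod μ) := by
  have hmeas : AEStronglyMeasurable
      (fun z : ℝ × Ω => z.1 ^ (r - 1) * (w z.2 * exp (-(A z.2 * z.1))))
      ((volume.restrict (Set.Ioi 0)).prod μ) := by
    have hpow : Measurable fun z : ℝ × Ω => z.1 ^ (r - 1) := by fun_prop
    refine hpow.aestronglyMeasurable.mul (hwm.comp_snd.mul ?_)
    exact continuous_exp.comp_aestronglyMeasurable
      (hAm.comp_snd.mul measurable_fst.aestronglyMeasurable).neg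
  refine (integrable_prod_iff hmeas).2 ⟨?_, hL.congr ?_⟩
  · filter_upwards [ae_restrict_mem measurableSet_Ioi] with t ht
    exact (hslice t ht).const_mul _
  · filter_upwards [ae_restrict_mem measurableSet_Ioi] with t ht
    rw [← integral_const_mul]
    refine integral_congr_ae ?_
    filter_upwards [hw] with p hp
    have : 0 ≤ t ^ (r - 1) := rpow_nonneg (le_of_lt ht) _
    rw [norm_of_nonneg (by positivity)]

lemma integrable_mul_rpow_neg_of_laplace [SFinite μ] (hr : 0 < r)
    (hwm : AEStronglyMeasurable w μ) (hAm : AEStronglyMeasurable A μ)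
    (hw : ∀ᵐ p ∂μ, 0 ≤ w p) (hA : ∀ᵐ p ∂μ, 0 < A p)
    (hslice : ∀ t, 0 < t → Integrable (fun p => w p * exp (-(A p * t))) μ)
    (hL : IntegrableOn (fun t => t ^ (r - 1) * ∫ p, w p * exp (-(A p * t)) ∂μ) (Set.Ioi 0)) :
    Integrable (fun p => w p * A p ^ (-r)) μ := by
  have h := (integrable_prod_rpow_mul_mul_exp_neg_mul hwm hAm hw hslice hL).integral_prod_right
  refine (h.const_mul (Gamma r)⁻¹).congr ?_
  filter_upwards [hA] with p hp
  rw [integral_Ioi_rpow_mul_mul_exp_neg_mul _ hr hp, inv_mul_cancel_left₀ (Gamma_pos_of_pos hr).ne']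

lemma Gamma_mul_integral_mul_rpow_neg [SFinite μ] (hr : 0 < r)
    (hwm : AEStronglyMeasurable w μ) (hAm : AEStronglyMeasurable A μ)
    (hw : ∀ᵐ p ∂μ, 0 ≤ w p) (hA : ∀ᵐ p ∂μ, 0 < A p)
    (hslice : ∀ t, 0 < t → Integrable (fun p => w p * exp (-(A p * t))) μ)
    (hL : IntegrableOn (fun t => t ^ (r - 1) * ∫ p, w p * exp (-(A p * t)) ∂μ) (Set.Ioi 0)) :
    Gamma r * ∫ p, w p * A p ^ (-r) ∂μ =
      ∫ t in Set.Ioi 0, t ^ (r - 1) * ∫ p, w p * exp (-(A p * t)) ∂μ := by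
  have hswap := integral_integral_swap
    (f := fun t p => t ^ (r - 1) * (w p * exp (-(A p * t))))
    (integrable_prod_rpow_mul_mul_exp_neg_mul hwm hAm hw hslice hL)
  simp only [integral_const_mul] at hswap
  rw [hswap, ← integral_const_mul]
  refine integral_congr_ae ?_
  filter_upwards [hA] with p hp
  exact (integral_Ioi_rpow_mul_mul_exp_neg_mul _ hr hp).symm

end LaplaceTransform

section ParabolicForm

variable {ι κ : Type*} [Fintype ι] [Fintype κ]

/-- The form `|z|² + ⟨q, v⟩` on `ℝ^ι × ℝ^κ`, which is homogeneous of degree two under the parabolic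
scaling `(z, v) ↦ (s z, s² v)`. -/
def parabolicForm (q : κ → ℝ) (p : (ι → ℝ) × (κ → ℝ)) : ℝ :=
  ∑ i, p.1 i ^ 2 + ∑ j, q j * p.2 j

/-- The open positive orthant of `ℝ^κ`. -/
def positiveOrthant (κ : Type*) : Set (κ → ℝ) :=
  Set.univ.pi fun _ => Set.Ioi 0

/-- The power weight `∏ v_j ^ (a_j - 1)`, the density on the positive orthant whose Laplace
transform is a product of Gamma integrals. -/
noncomputable def powerWeight (a v : κ → ℝ) : ℝ :=
  ∏ j, v j ^ (a j - 1)

lemma measurableSet_positiveOrthant {κ : Type*} [Countable κ] :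
    MeasurableSet (positiveOrthant κ) :=
  MeasurableSet.univ_pi fun _ => measurableSet_Ioi

lemma measurable_parabolicForm (q : κ → ℝ) :
    Measurable (parabolicForm q : (ι → ℝ) × (κ → ℝ) → ℝ) := by
  unfold parabolicForm
  fun_prop

lemma measurable_powerWeight (a : κ → ℝ) : Measurable (powerWeight a) := by
  unfold powerWeight
  fun_prop

lemma powerWeight_nonneg (a : κ → ℝ) {v : κ → ℝ} (hv : ∀ j, 0 ≤ v j) : 0 ≤ powerWeight a v :=
  Finset.prod_nonneg fun j _ => rpow_nonneg (hv j) _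

lemma powerWeight_smul (a : κ → ℝ) {v : κ → ℝ} (hv : ∀ j, 0 ≤ v j) {s : ℝ} (hs : 0 < s) :
    powerWeight a (s • v) = s ^ (∑ j, a j - Fintype.card κ) * powerWeight a v := by
  have hexp : ∑ j, a j - Fintype.card κ = ∑ j, (a j - 1) := by simp
  rw [hexp, rpow_sum_of_pos hs, powerWeight, powerWeight, ← Finset.prod_mul_distrib]
  exact Finset.prod_congr rfl fun j _ => mul_rpow hs.le (hv j)

lemma sum_sq_le_parabolicForm {q : κ → ℝ} {p : (ι → ℝ) × (κ → ℝ)} (hq : ∀ j, 0 ≤ q j)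
    (hv : ∀ j, 0 ≤ p.2 j) : ∑ i, p.1 i ^ 2 ≤ parabolicForm q p :=
  le_add_of_nonneg_right (Finset.sum_nonneg fun j _ => mul_nonneg (hq j) (hv j))

lemma parabolicForm_nonneg {q : κ → ℝ} {p : (ι → ℝ) × (κ → ℝ)} (hq : ∀ j, 0 ≤ q j)
    (hv : ∀ j, 0 ≤ p.2 j) : 0 ≤ parabolicForm q p :=
  (Finset.sum_nonneg fun _ _ => sq_nonneg _).trans (sum_sq_le_parabolicForm hq hv)

lemma parabolicForm_mono {q q' : κ → ℝ} {p : (ι → ℝ) × (κ → ℝ)} (hq : ∀ j, q j ≤ q' j)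
    (hv : ∀ j, 0 ≤ p.2 j) : parabolicForm q p ≤ parabolicForm q' p :=
  add_le_add_right (Finset.sum_le_sum fun j _ => mul_le_mul_of_nonneg_right (hq j) (hv j)) _

lemma parabolicForm_smul (q : κ → ℝ) (s : ℝ) (p : (ι → ℝ) × (κ → ℝ)) :
    parabolicForm q (s • p.1, s ^ 2 • p.2) = s ^ 2 * parabolicForm q p := by
  simp only [parabolicForm, Pi.smul_apply, smul_eq_mul, mul_add, Finset.mul_sum, mul_pow,
    mul_left_comm]

lemma powerWeight_mul_exp_neg_parabolicForm (a q : κ → ℝ) (t : ℝ) (p : (ι → ℝ) × (κ → ℝ)) :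
    powerWeight a p.2 * exp (-((1 + parabolicForm q p) * t)) =
      exp (-t) * ((∏ i, exp (-t * p.1 i ^ 2)) *
        ∏ j, p.2 j ^ (a j - 1) * exp (-(q j * t * p.2 j))) := by
  have hexp : -((1 + parabolicForm q p) * t) =
      -t + (∑ i, -t * p.1 i ^ 2 + ∑ j, -(q j * t * p.2 j)) := by
    rw [parabolicForm, ← Finset.mul_sum, Finset.sum_neg_distrib,
      Finset.sum_congr rfl fun j _ => mul_right_comm (q j) t (p.2 j), ← Finset.sum_mul]
    ring
  rw [hexp, exp_add, exp_add, exp_sum, exp_sum, Finset.prod_mul_distrib, powerWeight]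
  ring

lemma volume_restrict_univ_prod_positiveOrthant :
    (volume : Measure ((ι → ℝ) × (κ → ℝ))).restrict (Set.univ ×ˢ positiveOrthant κ) =
      (volume : Measure (ι → ℝ)).prod (Measure.pi fun _ => volume.restrict (Set.Ioi 0)) := by
  rw [Measure.volume_eq_prod, ← Measure.prod_restrict, Measure.restrict_univ]
  exact congrArg _ (Measure.restrict_pi_pi _ _)

variable {a q : κ → ℝ}

lemma integrableOn_powerWeight_mul_exp_neg_parabolicForm (ha : ∀ j, 0 < a j) (hq : ∀ j, 0 < q j)
    {t : ℝ} (ht : 0 < t) :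
    IntegrableOn (fun p : (ι → ℝ) × (κ → ℝ) =>
      powerWeight a p.2 * exp (-((1 + parabolicForm q p) * t)))
      (Set.univ ×ˢ positiveOrthant κ) := by
  simp_rw [IntegrableOn, powerWeight_mul_exp_neg_parabolicForm,
    volume_restrict_univ_prod_positiveOrthant]
  refine (Integrable.mul_prod (f := fun z : ι → ℝ => ∏ i, exp (-t * z i ^ 2))
    (g := fun v : κ → ℝ => ∏ j, v j ^ (a j - 1) * exp (-(q j * t * v j))) ?_ ?_).const_mul _
  · exact Integrable.fintype_prod (f := fun _ (z : ℝ) => exp (-t * z ^ 2))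
      fun _ => integrable_exp_neg_mul_sq ht
  · exact Integrable.fintype_prod (f := fun j (v : ℝ) => v ^ (a j - 1) * exp (-(q j * t * v)))
      fun j => integrableOn_rpow_mul_exp_neg_mul (ha j) (mul_pos (hq j) ht)

lemma integral_powerWeight_mul_exp_neg_parabolicForm (ha : ∀ j, 0 < a j) (hq : ∀ j, 0 < q j)
    {t : ℝ} (ht : 0 < t) :
    ∫ p in (Set.univ : Set (ι → ℝ)) ×ˢ positiveOrthant κ,
        powerWeight a p.2 * exp (-((1 + parabolicForm q p) * t)) =
      π ^ ((Fintype.card ι : ℝ) / 2) * (∏ j, q j ^ (-a j) * Gamma (a j)) *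
        (t ^ (-((Fintype.card ι : ℝ) / 2 + ∑ j, a j)) * exp (-t)) := by
  have hgauss : ∫ z : ι → ℝ, ∏ i, exp (-t * z i ^ 2) = (π / t) ^ ((Fintype.card ι : ℝ) / 2) := by
    rw [integral_fintype_prod_volume_eq_prod (f := fun _ (z : ℝ) => exp (-t * z ^ 2))]
    simp_rw [integral_gaussian, Finset.prod_const, Finset.card_univ]
    rw [sqrt_eq_rpow, ← rpow_natCast, ← rpow_mul (by positivity), one_div_mul_eq_div]
  have hgamma : ∫ v : κ → ℝ, ∏ j, v j ^ (a j - 1) * exp (-(q j * t * v j))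
      ∂(Measure.pi fun _ => volume.restrict (Set.Ioi 0)) =
      t ^ (-∑ j, a j) * ∏ j, q j ^ (-a j) * Gamma (a j) := by
    rw [integral_fintype_prod_eq_prod
      (f := fun j (v : ℝ) => v ^ (a j - 1) * exp (-(q j * t * v))), ← Finset.sum_neg_distrib,
      rpow_sum_of_pos ht, ← Finset.prod_mul_distrib]
    refine Finset.prod_congr rfl fun j _ => ?_
    rw [integral_Ioi_rpow_mul_exp_neg_mul (ha j) (mul_pos (hq j) ht), mul_rpow (hq j).le ht.le]
    ring
  simp_rw [powerWeight_mul_exp_neg_parabolicForm, volume_restrict_univ_prod_positiveOrthant]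
  rw [integral_const_mul, integral_prod_mul (fun z : ι → ℝ => ∏ i, exp (-t * z i ^ 2))
    fun v : κ → ℝ => ∏ j, v j ^ (a j - 1) * exp (-(q j * t * v j)), hgauss,
    hgamma, div_rpow pi_pos.le ht.le, neg_add, rpow_add ht, rpow_neg ht.le (_ / 2)]
  ring

lemma rpow_mul_integral_powerWeight_mul_exp_neg_parabolicForm (ha : ∀ j, 0 < a j)
    (hq : ∀ j, 0 < q j) (r : ℝ) {t : ℝ} (ht : 0 < t) :
    t ^ (r - 1) * ∫ p in (Set.univ : Set (ι → ℝ)) ×ˢ positiveOrthant κ,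
        powerWeight a p.2 * exp (-((1 + parabolicForm q p) * t)) =
      π ^ ((Fintype.card ι : ℝ) / 2) * (∏ j, q j ^ (-a j) * Gamma (a j)) *
        (t ^ (r - ((Fintype.card ι : ℝ) / 2 + ∑ j, a j) - 1) * exp (-(1 * t))) := by
  rw [integral_powerWeight_mul_exp_neg_parabolicForm ha hq ht, one_mul, sub_right_comm,
    sub_eq_add_neg (r - 1), rpow_add ht]
  ring

lemma integrableOn_rpow_mul_integral_powerWeight_mul_exp (ha : ∀ j, 0 < a j) (hq : ∀ j, 0 < q j)
    {r : ℝ} (hr : (Fintype.card ι : ℝ) / 2 + ∑ j, a j < r) :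
    IntegrableOn (fun t => t ^ (r - 1) * ∫ p in (Set.univ : Set (ι → ℝ)) ×ˢ positiveOrthant κ,
      powerWeight a p.2 * exp (-((1 + parabolicForm q p) * t))) (Set.Ioi 0) :=
  IntegrableOn.congr_fun
    ((integrableOn_rpow_mul_exp_neg_mul (sub_pos.2 hr) one_pos).const_mul _)
    (fun _ ht => (rpow_mul_integral_powerWeight_mul_exp_neg_parabolicForm ha hq r ht).symm)
    measurableSet_Ioi

lemma ae_forall_pos_of_restrict_positiveOrthant :
    ∀ᵐ p ∂(volume : Measure ((ι → ℝ) × (κ → ℝ))).restrict (Set.univ ×ˢ positiveOrthant κ),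
      ∀ j, 0 < p.2 j := by
  filter_upwards [ae_restrict_mem (MeasurableSet.univ.prod measurableSet_positiveOrthant)]
    with p hp j
  exact hp.2 j (Set.mem_univ j)

lemma pos_of_card_div_two_add_sum_lt (ha : ∀ j, 0 < a j) {r : ℝ}
    (hr : (Fintype.card ι : ℝ) / 2 + ∑ j, a j < r) : 0 < r :=
  (add_nonneg (by positivity) (Finset.sum_nonneg fun j _ => (ha j).le)).trans_lt hr

lemma integrableOn_powerWeight_mul_rpow_neg_parabolicForm (ha : ∀ j, 0 < a j) (hq : ∀ j, 0 < q j)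
    {r : ℝ} (hr : (Fintype.card ι : ℝ) / 2 + ∑ j, a j < r) :
    IntegrableOn (fun p : (ι → ℝ) × (κ → ℝ) =>
      powerWeight a p.2 * (1 + parabolicForm q p) ^ (-r)) (Set.univ ×ˢ positiveOrthant κ) := by
  refine integrable_mul_rpow_neg_of_laplace (pos_of_card_div_two_add_sum_lt ha hr)
    ((measurable_powerWeight a).comp measurable_snd).aestronglyMeasurable
    ((measurable_parabolicForm q).const_add 1).aestronglyMeasurable ?_ ?_
    (fun t => integrableOn_powerWeight_mul_exp_neg_parabolicForm ha hq)
    (integrableOn_rpow_mul_integral_powerWeight_mul_exp ha hq hr)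
  · filter_upwards [ae_forall_pos_of_restrict_positiveOrthant] with p hp
    exact powerWeight_nonneg a fun j => (hp j).le
  · filter_upwards [ae_forall_pos_of_restrict_positiveOrthant] with p hp
    linarith [parabolicForm_nonneg (fun j => (hq j).le) fun j => (hp j).le]

lemma integral_powerWeight_mul_rpow_neg_parabolicForm (ha : ∀ j, 0 < a j) (hq : ∀ j, 0 < q j)
    {r : ℝ} (hr : (Fintype.card ι : ℝ) / 2 + ∑ j, a j < r) :
    ∫ p in (Set.univ : Set (ι → ℝ)) ×ˢ positiveOrthant κ,
        powerWeight a p.2 * (1 + parabolicForm q p) ^ (-r) =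
      π ^ ((Fintype.card ι : ℝ) / 2) * (∏ j, q j ^ (-a j) * Gamma (a j)) *
        (Gamma (r - ((Fintype.card ι : ℝ) / 2 + ∑ j, a j)) / Gamma r) := by
  have hr0 := pos_of_card_div_two_add_sum_lt ha hr
  have h := Gamma_mul_integral_mul_rpow_neg (w := fun p : (ι → ℝ) × (κ → ℝ) => powerWeight a p.2)
    (A := fun p => 1 + parabolicForm q p) hr0
    ((measurable_powerWeight a).comp measurable_snd).aestronglyMeasurable
    ((measurable_parabolicForm q).const_add 1).aestronglyMeasurable ?_ ?_
    (fun t => integrableOn_powerWeight_mul_exp_neg_parabolicForm ha hq)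
    (integrableOn_rpow_mul_integral_powerWeight_mul_exp ha hq hr)
  · rw [setIntegral_congr_fun measurableSet_Ioi fun t ht =>
      rpow_mul_integral_powerWeight_mul_exp_neg_parabolicForm (ι := ι) ha hq r ht,
      integral_const_mul, integral_Ioi_rpow_mul_exp_neg_mul (sub_pos.2 hr) one_pos, one_rpow,
      one_mul] at h
    rw [mul_div_assoc', eq_div_iff (Gamma_pos_of_pos hr0).ne', mul_comm]
    exact h
  · filter_upwards [ae_forall_pos_of_restrict_positiveOrthant] with p hp
    exact powerWeight_nonneg a fun j => (hp j).le
  · filter_upwards [ae_forall_pos_of_restrict_positiveOrthant] with p hp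
    linarith [parabolicForm_nonneg (fun j => (hq j).le) fun j => (hp j).le]

end ParabolicForm

section ShiftedPower

lemma min_one_mul_one_add_le {c R : ℝ} (hR : 0 ≤ R) : min c 1 * (1 + R) ≤ c + R := by
  nlinarith [min_le_left c 1, min_le_right c 1]

lemma rpow_le_rpow_mul_one_add_rpow_neg {r R Q b p : ℝ} (hr : 0 < r) (hR : 0 ≤ R)
    (hQ : r * (1 + R) ≤ Q) (hp : p ≤ 0) (hpb : p ≤ -b) : Q ^ p ≤ r ^ p * (1 + R) ^ (-b) :=
  calc Q ^ p ≤ (r * (1 + R)) ^ p := rpow_le_rpow_of_nonpos (by positivity) hQ hp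
    _ = r ^ p * (1 + R) ^ p := mul_rpow hr.le (by positivity)
    _ ≤ r ^ p * (1 + R) ^ (-b) := by
      gcongr
      exact le_add_of_nonneg_right hR

variable {Ω : Type*} [MeasurableSpace Ω] {μ : Measure Ω} {F R : Ω → ℝ} {b p : ℝ}

lemma norm_mul_rpow_le_of_mul_one_add_le {f r R Q : ℝ} (hr : 0 < r) (hR : 0 ≤ R)
    (hQ : r * (1 + R) ≤ Q) (hp : p ≤ 0) (hpb : p ≤ -b) :
    ‖f * Q ^ p‖ ≤ r ^ p * ‖f * (1 + R) ^ (-b)‖ := by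
  have hQ0 : 0 ≤ Q := (by positivity : 0 ≤ r * (1 + R)).trans hQ
  rw [norm_mul, norm_mul, norm_of_nonneg (rpow_nonneg hQ0 _),
    norm_of_nonneg (by positivity : 0 ≤ (1 + R) ^ (-b)), mul_left_comm]
  gcongr
  exact rpow_le_rpow_mul_one_add_rpow_neg hr hR hQ hp hpb

lemma aestronglyMeasurable_mul_add_rpow (hF : AEStronglyMeasurable F μ) (hR : Measurable R)
    (c p : ℝ) : AEStronglyMeasurable (fun ω => F ω * (c + R ω) ^ p) μ :=
  hF.mul ((hR.const_add c).pow_const p).aestronglyMeasurable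

lemma integrable_mul_add_rpow (hF : AEStronglyMeasurable F μ) (hRm : Measurable R)
    (hR : ∀ᵐ ω ∂μ, 0 ≤ R ω) (hint : Integrable (fun ω => F ω * (1 + R ω) ^ (-b)) μ)
    (hp : p ≤ 0) (hpb : p ≤ -b) {c : ℝ} (hc : 0 < c) :
    Integrable (fun ω => F ω * (c + R ω) ^ p) μ := by
  refine (hint.norm.const_mul (min c 1 ^ p)).mono' (aestronglyMeasurable_mul_add_rpow hF hRm c p) ?_
  filter_upwards [hR] with ω hω
  exact norm_mul_rpow_le_of_mul_one_add_le (lt_min hc one_pos) hω (min_one_mul_one_add_le hω) hp hpb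

lemma hasDerivAt_integral_mul_add_rpow_neg (hF : AEStronglyMeasurable F μ) (hRm : Measurable R)
    (hR : ∀ᵐ ω ∂μ, 0 ≤ R ω) (hint : Integrable (fun ω => F ω * (1 + R ω) ^ (-b)) μ)
    (hb : 0 ≤ b) {c : ℝ} (hc : 0 < c) :
    HasDerivAt (fun c => ∫ ω, F ω * (c + R ω) ^ (-b) ∂μ)
      (-b * ∫ ω, F ω * (c + R ω) ^ (-b - 1) ∂μ) c := by
  rw [← integral_const_mul]
  have hbound : ∀ᵐ ω ∂μ, ∀ x ∈ Set.Ioi (c / 2), ‖-b * (F ω * (x + R ω) ^ (-b - 1))‖ ≤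
      ‖-b‖ * (min (c / 2) 1 ^ (-b - 1) * ‖F ω * (1 + R ω) ^ (-b)‖) := by
    filter_upwards [hR] with ω hω x hx
    rw [norm_mul]
    gcongr
    refine norm_mul_rpow_le_of_mul_one_add_le (lt_min (half_pos hc) one_pos) hω
      ((min_one_mul_one_add_le hω).trans ?_) (by linarith) (by linarith)
    exact add_le_add_left (le_of_lt hx) _
  refine (hasDerivAt_integral_of_dominated_loc_of_deriv_le (Ioi_mem_nhds (half_lt_self hc))
    (Eventually.of_forall fun c => aestronglyMeasurable_mul_add_rpow hF hRm c _)
    (integrable_mul_add_rpow hF hRm hR hint (by linarith) le_rfl hc)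
    ((aestronglyMeasurable_mul_add_rpow hF hRm c _).const_mul _) hbound
    ((hint.norm.const_mul _).const_mul _) ?_).2
  filter_upwards [hR] with ω hω x hx
  have hpos : 0 < x + R ω := by linarith [Set.mem_Ioi.1 hx]
  refine ((((hasDerivAt_id' x).add_const (R ω)).rpow_const (p := -b) (Or.inl hpos.ne')).const_mul
    (F ω)).congr_deriv ?_
  ring

lemma hasDerivAt_integral_mul_sq_add_rpow_neg (hF : AEStronglyMeasurable F μ) (hRm : Measurable R)
    (hR : ∀ᵐ ω ∂μ, 0 ≤ R ω) (hint : Integrable (fun ω => F ω * (1 + R ω) ^ (-b)) μ)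
    (hb : 0 ≤ b) {s : ℝ} (hs : 0 < s) :
    HasDerivAt (fun s => ∫ ω, F ω * (s ^ 2 + R ω) ^ (-b) ∂μ)
      (-2 * b * s * ∫ ω, F ω * (s ^ 2 + R ω) ^ (-b - 1) ∂μ) s := by
  refine (HasDerivAt.comp (h := fun s => s ^ 2) s
    (hasDerivAt_integral_mul_add_rpow_neg hF hRm hR hint hb (pow_pos hs 2))
    (hasDerivAt_pow 2 s)).congr_deriv ?_
  push_cast
  ring

lemma tendsto_rpow_mul_integral_mul_sq_add_rpow_zero {η a : ℝ} (hη : 0 < η)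
    (hR : ∀ᵐ ω ∂μ, η ≤ R ω) (hint : Integrable (fun ω => F ω * (1 + R ω) ^ (-b)) μ)
    (hp : p ≤ 0) (hpb : p ≤ -b) (ha : 0 < a) :
    Tendsto (fun s : ℝ => s ^ a * ∫ ω, F ω * (s ^ 2 + R ω) ^ p ∂μ) (𝓝[>] 0) (𝓝 0) := by
  have hbound : ∀ s : ℝ, ‖∫ ω, F ω * (s ^ 2 + R ω) ^ p ∂μ‖ ≤
      ∫ ω, (min η 1 / 2) ^ p * ‖F ω * (1 + R ω) ^ (-b)‖ ∂μ := fun s => by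
    refine norm_integral_le_of_norm_le (hint.norm.const_mul _) ?_
    filter_upwards [hR] with ω hω
    have hmin := min_one_mul_one_add_le (c := η) (hη.le.trans hω)
    exact norm_mul_rpow_le_of_mul_one_add_le (half_pos (lt_min hη one_pos)) (hη.le.trans hω)
      (by nlinarith [sq_nonneg s]) hp hpb
  have hpow : Tendsto (fun s : ℝ => s ^ a) (𝓝[>] 0) (𝓝 0) := by
    simpa only [zero_rpow ha.ne'] using
      (continuousAt_rpow_const 0 a (Or.inr ha.le)).tendsto.mono_left nhdsWithin_le_nhds
  exact hpow.zero_mul_isBoundedUnder_le (isBoundedUnder_of ⟨_, hbound⟩)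

end ShiftedPower

section ParabolicDilation

variable {ι κ : Type*}

/-- The anisotropic dilation `(z, v) ↦ (x + s z, s² v)` centred at `(x, 0)`, adapted to the
homogeneity of `parabolicForm`. -/
def parabolicDilation (x : ι → ℝ) (s : ℝ) (p : (ι → ℝ) × (κ → ℝ)) :
    (ι → ℝ) × (κ → ℝ) :=
  (x + s • p.1, s ^ 2 • p.2)

lemma measurableEmbedding_parabolicDilation [Countable ι] [Countable κ]
    (x : ι → ℝ) {s : ℝ} (hs : s ≠ 0) :
    MeasurableEmbedding (parabolicDilation x s : (ι → ℝ) × (κ → ℝ) → (ι → ℝ) × (κ → ℝ)) :=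
  (((Homeomorph.smulOfNeZero s hs).trans (Homeomorph.addLeft x)).prodCongr
    (Homeomorph.smulOfNeZero (s ^ 2) (pow_ne_zero 2 hs))).measurableEmbedding

lemma tendsto_parabolicDilation (x : ι → ℝ) {p : (ι → ℝ) × (κ → ℝ)} (hp : ∀ j, 0 < p.2 j) :
    Tendsto (fun s => parabolicDilation x s p) (𝓝[>] 0)
      (𝓝[Set.univ ×ˢ positiveOrthant κ] (x, 0)) := by
  refine tendsto_nhdsWithin_iff.2 ⟨?_, ?_⟩
  · have hcont : Continuous fun s => parabolicDilation x s p := by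
      unfold parabolicDilation
      fun_prop
    simpa [parabolicDilation] using (hcont.tendsto 0).mono_left nhdsWithin_le_nhds
  · filter_upwards [self_mem_nhdsWithin] with s (hs : 0 < s)
    exact ⟨Set.mem_univ _, fun j _ => mul_pos (pow_pos hs 2) (hp j)⟩

variable [Fintype ι] [Fintype κ]

lemma map_add_smul_volume (x : ι → ℝ) {s : ℝ} (hs : s ≠ 0) :
    Measure.map (fun z : ι → ℝ => x + s • z) volume =
      ENNReal.ofReal |(s ^ Fintype.card ι)⁻¹| • volume := by
  have hcomp : (fun z : ι → ℝ => x + s • z) = (x + ·) ∘ (s • ·) := rfl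
  rw [hcomp, ← Measure.map_map (by fun_prop) (by fun_prop), Measure.map_addHaar_smul _ hs,
    Measure.map_smul, map_add_left_eq_self, Module.finrank_fintype_fun_eq_card]

lemma map_parabolicDilation_volume (x : ι → ℝ) {s : ℝ} (hs : 0 < s) :
    Measure.map (parabolicDilation x s) (volume : Measure ((ι → ℝ) × (κ → ℝ))) =
      ENNReal.ofReal (s ^ (-(Fintype.card ι + 2 * Fintype.card κ : ℝ))) • volume := by
  have hprod := Measure.map_prod_map (f := fun z : ι → ℝ => x + s • z)
    (g := fun v : κ → ℝ => 0 + s ^ 2 • v) volume volume (by fun_prop) (by fun_prop)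
  have hpow : |(s ^ Fintype.card ι)⁻¹| * |((s ^ 2) ^ Fintype.card κ)⁻¹| =
      s ^ (-(Fintype.card ι + 2 * Fintype.card κ : ℝ)) := by
    rw [abs_of_pos (by positivity), abs_of_pos (by positivity), rpow_neg hs.le, rpow_add hs,
      rpow_mul hs.le, rpow_natCast, rpow_natCast, rpow_two, mul_inv]
  rw [map_add_smul_volume x hs.ne', map_add_smul_volume 0 (pow_ne_zero 2 hs.ne'),
    Measure.prod_smul_left, Measure.prod_smul_right, smul_smul,
    ← ENNReal.ofReal_mul (abs_nonneg _), hpow] at hprod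
  simp only [zero_add] at hprod
  exact hprod.symm

lemma quasiMeasurePreserving_parabolicDilation (x : ι → ℝ) {s : ℝ} (hs : 0 < s) :
    Measure.QuasiMeasurePreserving
      (parabolicDilation x s : (ι → ℝ) × (κ → ℝ) → (ι → ℝ) × (κ → ℝ)) :=
  ⟨(measurableEmbedding_parabolicDilation x hs.ne').measurable, by
    rw [map_parabolicDilation_volume x hs]
    exact Measure.smul_absolutelyContinuous⟩

lemma setIntegral_eq_rpow_mul_setIntegral_preimage_parabolicDilation (x : ι → ℝ) {s : ℝ}
    (hs : 0 < s) (f : (ι → ℝ) × (κ → ℝ) → ℝ) (t : Set ((ι → ℝ) × (κ → ℝ))) :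
    ∫ p in t, f p = s ^ (Fintype.card ι + 2 * Fintype.card κ : ℝ) *
      ∫ p in parabolicDilation x s ⁻¹' t, f (parabolicDilation x s p) := by
  rw [← (measurableEmbedding_parabolicDilation x hs.ne').setIntegral_map,
    map_parabolicDilation_volume x hs, Measure.restrict_smul, integral_smul_measure,
    ENNReal.toReal_ofReal (by positivity), smul_eq_mul, ← mul_assoc, ← rpow_add hs, add_neg_cancel,
    rpow_zero, one_mul]

lemma parabolicForm_sub_parabolicDilation (q : κ → ℝ) (x : ι → ℝ) (s : ℝ)
    (p : (ι → ℝ) × (κ → ℝ)) :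
    parabolicForm q ((parabolicDilation x s p).1 - x, (parabolicDilation x s p).2) =
      s ^ 2 * parabolicForm q p := by
  rw [← parabolicForm_smul, parabolicDilation, add_sub_cancel_left]

end ParabolicDilation

section ParabolicConcentration

variable {ι κ : Type*} [Fintype ι] [Fintype κ]

/-- The form `|y - x|² + ⟨q(y), u⟩` at the point `(y, u)`: a `parabolicForm` centred at `(x, 0)`
whose coefficients are allowed to vary with `y`. -/
def parabolicFormAt (q : (ι → ℝ) → κ → ℝ) (x : ι → ℝ) (p : (ι → ℝ) × (κ → ℝ)) : ℝ :=
  parabolicForm (q p.1) (p.1 - x, p.2)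

lemma measurable_parabolicFormAt {q : (ι → ℝ) → κ → ℝ} (hq : Measurable q) (x : ι → ℝ) :
    Measurable (parabolicFormAt q x) := by
  unfold parabolicFormAt parabolicForm
  fun_prop

lemma sum_sub_sq_le_parabolicFormAt {q : (ι → ℝ) → κ → ℝ} {x : ι → ℝ} {p : (ι → ℝ) × (κ → ℝ)}
    (hq : ∀ j, 0 ≤ q p.1 j) (hv : ∀ j, 0 ≤ p.2 j) :
    ∑ i, (p.1 i - x i) ^ 2 ≤ parabolicFormAt q x p :=
  sum_sq_le_parabolicForm (p := (p.1 - x, p.2)) hq hv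

lemma parabolicFormAt_parabolicDilation (q : (ι → ℝ) → κ → ℝ) (x : ι → ℝ) (s : ℝ)
    (p : (ι → ℝ) × (κ → ℝ)) :
    parabolicFormAt q x (parabolicDilation x s p) =
      s ^ 2 * parabolicForm (q (parabolicDilation x s p).1) p :=
  parabolicForm_sub_parabolicDilation _ x s p

lemma preimage_parabolicDilation_univ_prod_positiveOrthant {ι κ : Type*} (x : ι → ℝ) {s : ℝ}
    (hs : 0 < s) :
    parabolicDilation x s ⁻¹' (Set.univ ×ˢ positiveOrthant κ) = Set.univ ×ˢ positiveOrthant κ := by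
  ext p
  simp [parabolicDilation, positiveOrthant, hs]

lemma powerWeight_smul_mul_sq_add_rpow_neg (a : κ → ℝ) {v : κ → ℝ} (hv : ∀ j, 0 ≤ v j) {s R : ℝ}
    (hs : 0 < s) (hR : 0 ≤ R) (r : ℝ) :
    powerWeight a (s ^ 2 • v) * (s ^ 2 + s ^ 2 * R) ^ (-r) =
      s ^ (2 * (∑ j, a j - Fintype.card κ) - 2 * r) * (powerWeight a v * (1 + R) ^ (-r)) := by
  rw [powerWeight_smul a hv (pow_pos hs 2), ← mul_one_add, mul_rpow (by positivity) (by positivity),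
    sub_eq_add_neg (2 * _), rpow_add hs, ← mul_neg, rpow_mul hs.le, rpow_mul hs.le, rpow_two]
  ring

/-- The function `h(y, u) u^(a-1) (s² + |y - x|² + ⟨q(y), u⟩)^(-r)` in the coordinates
`(y, u) = (x + s z, s² v)`, up to a power of `s`. -/
noncomputable def rescaledIntegrand (a : κ → ℝ) (q : (ι → ℝ) → κ → ℝ) (x : ι → ℝ)
    (h : (ι → ℝ) × (κ → ℝ) → ℝ) (r s : ℝ) (p : (ι → ℝ) × (κ → ℝ)) : ℝ :=
  h (parabolicDilation x s p) *
    (powerWeight a p.2 * (1 + parabolicForm (q (parabolicDilation x s p).1) p) ^ (-r))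

variable {a : κ → ℝ} {q : (ι → ℝ) → κ → ℝ} {x : ι → ℝ} {h : (ι → ℝ) × (κ → ℝ) → ℝ}
  {t : Set ((ι → ℝ) × (κ → ℝ))} {r : ℝ}

lemma rpow_mul_setIntegral_eq_setIntegral_rescaledIntegrand (ht : MeasurableSet t)
    (htpos : t ⊆ Set.univ ×ˢ positiveOrthant κ) (hqt : ∀ p ∈ t, ∀ j, 0 ≤ q p.1 j) {s : ℝ}
    (hs : 0 < s) :
    s ^ (2 * r - Fintype.card ι - 2 * ∑ j, a j) *
        ∫ p in t, h p * powerWeight a p.2 * (s ^ 2 + parabolicFormAt q x p) ^ (-r) =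
      ∫ p in Set.univ ×ˢ positiveOrthant κ,
        (parabolicDilation x s ⁻¹' t).indicator (rescaledIntegrand a q x h r s) p := by
  have hmeas := (measurableEmbedding_parabolicDilation x hs.ne').measurable ht
  have hsub : parabolicDilation x s ⁻¹' t ⊆ Set.univ ×ˢ positiveOrthant κ :=
    (Set.preimage_mono htpos).trans_eq (preimage_parabolicDilation_univ_prod_positiveOrthant x hs)
  have hcongr : ∀ p ∈ parabolicDilation x s ⁻¹' t,
      h (parabolicDilation x s p) * powerWeight a (parabolicDilation x s p).2 *
        (s ^ 2 + parabolicFormAt q x (parabolicDilation x s p)) ^ (-r) =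
      s ^ (2 * (∑ j, a j - Fintype.card κ) - 2 * r) * rescaledIntegrand a q x h r s p := by
    intro p hp
    have hv : ∀ j, 0 ≤ p.2 j := fun j => le_of_lt ((hsub hp).2 j (Set.mem_univ j))
    have hsnd : (parabolicDilation x s p).2 = s ^ 2 • p.2 := rfl
    rw [parabolicFormAt_parabolicDilation, mul_assoc, hsnd, powerWeight_smul_mul_sq_add_rpow_neg a
      hv hs (parabolicForm_nonneg (hqt _ hp) hv), mul_left_comm, rescaledIntegrand]
  rw [setIntegral_indicator hmeas, Set.inter_eq_right.2 hsub,
    setIntegral_eq_rpow_mul_setIntegral_preimage_parabolicDilation x hs,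
    setIntegral_congr_fun hmeas hcongr, integral_const_mul, ← mul_assoc, ← mul_assoc,
    ← rpow_add hs, ← rpow_add hs]
  ring_nf
  rw [rpow_zero, one_mul]

lemma aestronglyMeasurable_rescaledIntegrand (hq : Measurable q)
    (hh : AEStronglyMeasurable h (volume.restrict t)) {s : ℝ} (hs : 0 < s) :
    AEStronglyMeasurable (rescaledIntegrand a q x h r s)
      (volume.restrict (parabolicDilation x s ⁻¹' t)) := by
  have hkernel : Measurable fun p : (ι → ℝ) × (κ → ℝ) =>
      powerWeight a p.2 * (1 + parabolicForm (q (parabolicDilation x s p).1) p) ^ (-r) := by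
    unfold powerWeight parabolicForm parabolicDilation
    fun_prop
  exact (hh.comp_quasiMeasurePreserving ((quasiMeasurePreserving_parabolicDilation x hs).restrict
    (Set.mapsTo_preimage _ _))).mul hkernel.aestronglyMeasurable

lemma tendsto_rescaledIntegrand {h₀ : ℝ} (hqx : ContinuousAt q x) (hq0 : ∀ j, 0 < q x j)
    (hlim : Tendsto h (𝓝[Set.univ ×ˢ positiveOrthant κ] (x, 0)) (𝓝 h₀))
    {p : (ι → ℝ) × (κ → ℝ)} (hp : ∀ j, 0 < p.2 j) :
    Tendsto (fun s => rescaledIntegrand a q x h r s p) (𝓝[>] 0)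
      (𝓝 (h₀ * (powerWeight a p.2 * (1 + parabolicForm (q x) p) ^ (-r)))) := by
  have hdil := tendsto_parabolicDilation x hp
  have hqlim : Tendsto (fun s => q (parabolicDilation x s p).1) (𝓝[>] 0) (𝓝 (q x)) :=
    hqx.tendsto.comp ((continuous_fst.tendsto (x, 0)).comp (hdil.mono_right nhdsWithin_le_nhds))
  have hform : Tendsto (fun s => parabolicForm (q (parabolicDilation x s p).1) p) (𝓝[>] 0)
      (𝓝 (parabolicForm (q x) p)) := by
    have hcont : Continuous fun c => parabolicForm c p := by
      unfold parabolicForm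
      fun_prop
    exact (hcont.tendsto (q x)).comp hqlim
  have hpos : 0 < 1 + parabolicForm (q x) p := by
    linarith [parabolicForm_nonneg (p := p) (fun j => (hq0 j).le) fun j => (hp j).le]
  exact (hlim.comp hdil).mul
    (((hform.const_add 1).rpow_const (Or.inl hpos.ne')).const_mul (powerWeight a p.2))

lemma norm_indicator_rescaledIntegrand_le {K : ℝ} (hr : 0 ≤ r) (hq0 : ∀ j, 0 < q x j)
    (hK : ∀ p ∈ t, |h p| ≤ K) (hqt : ∀ p ∈ t, ∀ j, q x j / 2 ≤ q p.1 j) (s : ℝ)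
    {p : (ι → ℝ) × (κ → ℝ)} (hp : ∀ j, 0 ≤ p.2 j) :
    ‖(parabolicDilation x s ⁻¹' t).indicator (rescaledIntegrand a q x h r s) p‖ ≤
      |K| * (powerWeight a p.2 * (1 + parabolicForm (fun j => q x j / 2) p) ^ (-r)) := by
  have hweight := powerWeight_nonneg a hp
  have hform := parabolicForm_nonneg (p := p) (fun j => (half_pos (hq0 j)).le) hp
  by_cases hpt : p ∈ parabolicDilation x s ⁻¹' t
  · have hmono := parabolicForm_mono (hqt _ hpt) hp
    have hkernel : (1 + parabolicForm (q (parabolicDilation x s p).1) p) ^ (-r) ≤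
        (1 + parabolicForm (fun j => q x j / 2) p) ^ (-r) :=
      rpow_le_rpow_of_nonpos (by positivity) (by linarith) (neg_nonpos.2 hr)
    have hkernel0 : 0 ≤ (1 + parabolicForm (q (parabolicDilation x s p).1) p) ^ (-r) :=
      rpow_nonneg (by linarith) _
    rw [Set.indicator_of_mem hpt, rescaledIntegrand, norm_mul,
      norm_of_nonneg (mul_nonneg hweight hkernel0), norm_eq_abs]
    exact mul_le_mul ((hK _ hpt).trans (le_abs_self K)) (by gcongr) (by positivity) (abs_nonneg K)
  · rw [Set.indicator_of_notMem hpt, norm_zero]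
    positivity

lemma tendsto_rpow_mul_setIntegral_of_mem_nhdsWithin {h₀ K : ℝ} (ha : ∀ j, 0 < a j)
    (hr : (Fintype.card ι : ℝ) / 2 + ∑ j, a j < r) (hq : Measurable q) (hqx : ContinuousAt q x)
    (hq0 : ∀ j, 0 < q x j) (ht : MeasurableSet t) (htpos : t ⊆ Set.univ ×ˢ positiveOrthant κ)
    (htx : t ∈ 𝓝[Set.univ ×ˢ positiveOrthant κ] (x, 0))
    (hh : AEStronglyMeasurable h (volume.restrict t)) (hK : ∀ p ∈ t, |h p| ≤ K)
    (hqt : ∀ p ∈ t, ∀ j, q x j / 2 ≤ q p.1 j)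
    (hlim : Tendsto h (𝓝[Set.univ ×ˢ positiveOrthant κ] (x, 0)) (𝓝 h₀)) :
    Tendsto (fun s : ℝ => s ^ (2 * r - Fintype.card ι - 2 * ∑ j, a j) *
        ∫ p in t, h p * powerWeight a p.2 * (s ^ 2 + parabolicFormAt q x p) ^ (-r)) (𝓝[>] 0)
      (𝓝 (h₀ * (π ^ ((Fintype.card ι : ℝ) / 2) * (∏ j, q x j ^ (-a j) * Gamma (a j)) *
        (Gamma (r - ((Fintype.card ι : ℝ) / 2 + ∑ j, a j)) / Gamma r)))) := by
  rw [← integral_powerWeight_mul_rpow_neg_parabolicForm ha hq0 hr, ← integral_const_mul]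
  have hpos := ae_forall_pos_of_restrict_positiveOrthant (ι := ι) (κ := κ)
  refine Tendsto.congr' ?_ (tendsto_integral_filter_of_dominated_convergence
    (F := fun s => (parabolicDilation x s ⁻¹' t).indicator (rescaledIntegrand a q x h r s)) _ ?_ ?_
    ((integrableOn_powerWeight_mul_rpow_neg_parabolicForm ha
      (fun j => half_pos (hq0 j)) hr).const_mul |K|) ?_)
  · filter_upwards [self_mem_nhdsWithin] with s (hs : 0 < s)
    exact (rpow_mul_setIntegral_eq_setIntegral_rescaledIntegrand ht htpos
      (fun p hp j => (half_pos (hq0 j)).le.trans (hqt p hp j)) hs).symm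
  · filter_upwards [self_mem_nhdsWithin] with s (hs : 0 < s)
    exact (aestronglyMeasurable_indicator_iff
      ((measurableEmbedding_parabolicDilation x hs.ne').measurable ht)).2
      ((aestronglyMeasurable_rescaledIntegrand hq hh hs).mono_measure
        (Measure.restrict_mono_measure Measure.restrict_le_self _))
  · refine Eventually.of_forall fun s => ?_
    filter_upwards [hpos] with p hp
    exact norm_indicator_rescaledIntegrand_le (pos_of_card_div_two_add_sum_lt ha hr).le hq0 hK hqt s
      fun j => (hp j).le
  · filter_upwards [hpos] with p hp
    refine (tendsto_rescaledIntegrand hqx hq0 hlim hp).congr' ?_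
    filter_upwards [(tendsto_parabolicDilation x hp).eventually htx] with s hs
    exact (Set.indicator_of_mem (s := parabolicDilation x s ⁻¹' t) hs
      (rescaledIntegrand a q x h r s)).symm

lemma tendsto_rpow_mul_setIntegral_sq_add_parabolicFormAt {D : Set ((ι → ℝ) × (κ → ℝ))} {b h₀ : ℝ}
    (ha : ∀ j, 0 < a j) (hr : (Fintype.card ι : ℝ) / 2 + ∑ j, a j < r) (hbr : b ≤ r)
    (hq : Measurable q) (hqx : ContinuousAt q x) (hq0 : ∀ j, 0 < q x j) (hD : MeasurableSet D)
    (hDpos : D ⊆ Set.univ ×ˢ positiveOrthant κ)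
    (hDx : D ∈ 𝓝[Set.univ ×ˢ positiveOrthant κ] (x, 0))
    (hh : AEStronglyMeasurable h (volume.restrict D))
    (hlim : Tendsto h (𝓝[Set.univ ×ˢ positiveOrthant κ] (x, 0)) (𝓝 h₀))
    (hsep : ∀ O ∈ 𝓝 (x, (0 : κ → ℝ)), ∃ η > 0, ∀ p ∈ D \ O, η ≤ parabolicFormAt q x p)
    (hint : IntegrableOn (fun p => h p * powerWeight a p.2 * (1 + parabolicFormAt q x p) ^ (-b)) D)
    (hnn : ∀ p ∈ D, 0 ≤ parabolicFormAt q x p) :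
    Tendsto (fun s : ℝ => s ^ (2 * r - Fintype.card ι - 2 * ∑ j, a j) *
        ∫ p in D, h p * powerWeight a p.2 * (s ^ 2 + parabolicFormAt q x p) ^ (-r)) (𝓝[>] 0)
      (𝓝 (h₀ * (π ^ ((Fintype.card ι : ℝ) / 2) * (∏ j, q x j ^ (-a j) * Gamma (a j)) *
        (Gamma (r - ((Fintype.card ι : ℝ) / 2 + ∑ j, a j)) / Gamma r)))) := by
  have hr0 := pos_of_card_div_two_add_sum_lt ha hr
  have hgood : {p | |h p| ≤ |h₀| + 1 ∧ ∀ j, q x j / 2 ≤ q p.1 j} ∈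
      𝓝[Set.univ ×ˢ positiveOrthant κ] (x, 0) := by
    have hqj : ∀ j, ∀ᶠ p in 𝓝 (x, (0 : κ → ℝ)), q x j / 2 ≤ q p.1 j := fun j =>
      (((continuousAt_pi.1 hqx j).tendsto.comp
        (continuous_fst.tendsto (x, (0 : κ → ℝ)))).eventually_const_le (half_lt_self (hq0 j)))
    exact (hlim.abs.eventually_le_const (lt_add_one _)).and
      ((eventually_all.2 hqj).filter_mono nhdsWithin_le_nhds)
  obtain ⟨O, hO, hxO, hOgood⟩ := mem_nhdsWithin.1 hgood
  obtain ⟨η, hη, hηD⟩ := hsep O (hO.mem_nhds hxO)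
  have hgood' : ∀ p ∈ D ∩ O, |h p| ≤ |h₀| + 1 ∧ ∀ j, q x j / 2 ≤ q p.1 j := fun p hp =>
    hOgood ⟨hp.2, hDpos hp.1⟩
  have hnear := tendsto_rpow_mul_setIntegral_of_mem_nhdsWithin ha hr hq hqx hq0
    (hD.inter hO.measurableSet) (Set.inter_subset_left.trans hDpos)
    (inter_mem hDx (mem_nhdsWithin_of_mem_nhds (hO.mem_nhds hxO)))
    (hh.mono_set Set.inter_subset_left) (fun p hp => (hgood' p hp).1) (fun p hp => (hgood' p hp).2)
    hlim
  have hfar := tendsto_rpow_mul_integral_mul_sq_add_rpow_zero hη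
    (ae_restrict_of_forall_mem (hD.diff hO.measurableSet) hηD) (hint.mono_set Set.sdiff_subset)
    (neg_nonpos.2 hr0.le) (neg_le_neg hbr)
    (by linarith : 0 < 2 * r - Fintype.card ι - 2 * ∑ j, a j)
  rw [← add_zero (h₀ * _)]
  refine (hnear.add hfar).congr' ?_
  filter_upwards [self_mem_nhdsWithin] with s (hs : 0 < s)
  rw [← mul_add, integral_inter_add_sdiff hO.measurableSet]
  exact integrable_mul_add_rpow
    (hh.mul ((measurable_powerWeight a).comp measurable_snd).aestronglyMeasurable)
    (measurable_parabolicFormAt hq x) (ae_restrict_of_forall_mem hD hnn) hint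
    (neg_nonpos.2 hr0.le) (neg_le_neg hbr) (pow_pos hs 2)

end ParabolicConcentration

section EulerIntegral

lemma integrableOn_rpow_mul_one_sub_rpow {a b : ℝ} (ha : 0 < a) (hb : 0 < b) :
    IntegrableOn (fun u : ℝ => u ^ (a - 1) * (1 - u) ^ (b - 1)) (Set.Ioo 0 1) := by
  have h := Complex.betaIntegral_convergent (u := (a : ℂ)) (v := (b : ℂ)) (by simpa) (by simpa)
  rw [intervalIntegrable_iff_integrableOn_Ioo_of_le zero_le_one] at h
  refine IntegrableOn.congr_fun h.norm (fun u hu => ?_) measurableSet_Ioo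
  have hsub : (1 - (u : ℂ)) = ((1 - u : ℝ) : ℂ) := by push_cast; rfl
  rw [norm_mul, hsub, Complex.norm_cpow_eq_rpow_re_of_pos hu.1,
    Complex.norm_cpow_eq_rpow_re_of_pos (sub_pos.2 hu.2)]
  simp

/-- The open unit cube of `ℝ^κ`, which carries the Euler integral up to a null set. -/
def openUnitCube (κ : Type*) : Set (κ → ℝ) :=
  Set.univ.pi fun _ => Set.Ioo 0 1

variable {κ : Type*} [Fintype κ]

/-- The density `∏ u_j ^ (a_j - 1) (1 - u_j) ^ (c_j - a_j - 1)` of the Euler integral of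
`lauricellaFA`. -/
noncomputable def eulerWeight (a c u : κ → ℝ) : ℝ :=
  powerWeight a u * powerWeight (c - a) (1 - u)

/-- The constant `∏ Γ(c_j) / (Γ(a_j) Γ(c_j - a_j))` in front of the Euler integral of
`lauricellaFA`. -/
noncomputable def eulerConst (a c : κ → ℝ) : ℝ :=
  ∏ j, Gamma (c j) / (Gamma (a j) * Gamma (c j - a j))

lemma measurableSet_openUnitCube {κ : Type*} [Countable κ] : MeasurableSet (openUnitCube κ) :=
  MeasurableSet.univ_pi fun _ => measurableSet_Ioo

lemma eulerWeight_eq_prod (a c u : κ → ℝ) :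
    eulerWeight a c u = ∏ j, u j ^ (a j - 1) * (1 - u j) ^ (c j - a j - 1) :=
  Finset.prod_mul_distrib.symm

lemma integrableOn_eulerWeight {a c : κ → ℝ} (ha : ∀ j, 0 < a j) (hac : ∀ j, a j < c j) :
    IntegrableOn (eulerWeight a c) (openUnitCube κ) := by
  have hpi : (volume : Measure (κ → ℝ)).restrict (openUnitCube κ) =
      Measure.pi fun _ => volume.restrict (Set.Ioo 0 1) := Measure.restrict_pi_pi _ _
  rw [IntegrableOn, hpi, funext (eulerWeight_eq_prod a c)]
  exact Integrable.fintype_prod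
    (f := fun j (u : ℝ) => u ^ (a j - 1) * (1 - u) ^ (c j - a j - 1))
    fun j => integrableOn_rpow_mul_one_sub_rpow (ha j) (sub_pos.2 (hac j))

lemma lauricellaFA_eq_setIntegral_openUnitCube (b : ℝ) (a c x : κ → ℝ) :
    lauricellaFA b a c x = eulerConst a c *
      ∫ u in openUnitCube κ, eulerWeight a c u * (1 - ∑ j, x j * u j) ^ (-b) := by
  have hae : openUnitCube κ =ᵐ[volume] Set.univ.pi fun _ => Set.Icc (0 : ℝ) 1 :=
    Measure.pi_Ioo_ae_eq_pi_Icc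
  simp_rw [lauricellaFA, eulerConst, eulerWeight_eq_prod, setIntegral_congr_set hae]

lemma rpow_neg_mul_lauricellaFA_neg_div (b : ℝ) (a c : κ → ℝ) {q : κ → ℝ} (hq : ∀ j, 0 ≤ q j)
    {ρ : ℝ} (hρ : 0 < ρ) :
    ρ ^ (-b) * lauricellaFA b a c (fun j => -q j / ρ) = eulerConst a c *
      ∫ u in openUnitCube κ, eulerWeight a c u * (ρ + ∑ j, q j * u j) ^ (-b) := by
  rw [lauricellaFA_eq_setIntegral_openUnitCube, mul_left_comm, ← integral_const_mul]
  congr 1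
  refine setIntegral_congr_fun measurableSet_openUnitCube fun u hu => ?_
  have hsum : 1 - ∑ j, -q j / ρ * u j = (ρ + ∑ j, q j * u j) / ρ := by
    simp_rw [add_div, div_self hρ.ne', Finset.sum_div, neg_div, neg_mul, Finset.sum_neg_distrib,
      sub_neg_eq_add, div_mul_eq_mul_div]
  have hnonneg : 0 ≤ ∑ j, q j * u j :=
    Finset.sum_nonneg fun j _ => mul_nonneg (hq j) (hu j (Set.mem_univ j)).1.le
  simp only [hsum]
  rw [div_rpow (by positivity) hρ.le, mul_left_comm,
    mul_div_cancel₀ _ (rpow_pos_of_pos hρ (-b)).ne']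

end EulerIntegral

section PolynomialGrowth

lemma rpow_le_rpow_abs_mul_rpow {A B M : ℝ} (hA : 0 < A) (hB : 0 < B) (hM : 0 < M)
    (hAB : A ≤ M * B) (hBA : B ≤ M * A) (p : ℝ) : A ^ p ≤ M ^ |p| * B ^ p := by
  rcases le_total 0 p with hp | hp
  · rw [abs_of_nonneg hp, ← mul_rpow hM.le hB.le]
    exact rpow_le_rpow hA.le hAB hp
  · have hdiv : B / M ≤ A := (div_le_iff₀' hM).2 hBA
    calc A ^ p ≤ (B / M) ^ p := rpow_le_rpow_of_nonpos (by positivity) hdiv hp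
      _ = M ^ |p| * B ^ p := by
        rw [abs_of_nonpos hp, div_rpow hB.le hM.le, rpow_neg hM.le, div_eq_inv_mul]

variable {ι κ : Type*} [Fintype ι] [Fintype κ]

lemma norm_sq_le_sum_sq (z : ι → ℝ) : ‖z‖ ^ 2 ≤ ∑ i, z i ^ 2 := by
  have h : ‖z‖ ≤ √(∑ i, z i ^ 2) :=
    (pi_norm_le_iff_of_nonneg (sqrt_nonneg _)).2 fun i =>
      abs_le_sqrt (Finset.single_le_sum (fun i _ => sq_nonneg (z i)) (Finset.mem_univ i))
  exact (le_sqrt (norm_nonneg z) (by positivity)).1 h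

lemma one_add_sum_sub_sq_le (x y : ι → ℝ) :
    1 + ∑ i, (y i - x i) ^ 2 ≤ 2 * (1 + ∑ i, x i ^ 2) * (1 + ∑ i, y i ^ 2) := by
  have h : ∑ i, (y i - x i) ^ 2 ≤ 2 * ∑ i, y i ^ 2 + 2 * ∑ i, x i ^ 2 := by
    rw [Finset.mul_sum, Finset.mul_sum, ← Finset.sum_add_distrib]
    exact Finset.sum_le_sum fun i _ => by nlinarith [sq_nonneg (y i + x i)]
  nlinarith [Finset.sum_nonneg fun i (_ : i ∈ Finset.univ) => sq_nonneg (x i),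
    mul_nonneg (Finset.sum_nonneg fun i (_ : i ∈ Finset.univ) => sq_nonneg (x i))
      (Finset.sum_nonneg fun i (_ : i ∈ Finset.univ) => sq_nonneg (y i))]

lemma one_add_sum_sq_le (x y : ι → ℝ) :
    1 + ∑ i, y i ^ 2 ≤ 2 * (1 + ∑ i, x i ^ 2) * (1 + ∑ i, (y i - x i) ^ 2) := by
  simpa using one_add_sum_sub_sq_le (-x) (y - x)

lemma integrable_one_add_sum_sq_rpow_neg {p : ℝ} (hp : (Fintype.card ι : ℝ) / 2 < p) :
    Integrable fun y : ι → ℝ => (1 + ∑ i, y i ^ 2) ^ (-p) := by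
  have h := integrable_rpow_neg_one_add_norm_sq (E := ι → ℝ) (μ := volume) (r := 2 * p)
    (by rw [Module.finrank_fintype_fun_eq_card]; linarith)
  refine h.mono' (Measurable.aestronglyMeasurable (by fun_prop)) (Eventually.of_forall fun y => ?_)
  rw [norm_of_nonneg (by positivity), neg_mul_eq_mul_neg, mul_div_cancel_left₀ _ two_ne_zero]
  have hcard : (0 : ℝ) ≤ Fintype.card ι / 2 := by positivity
  exact rpow_le_rpow_of_nonpos (by positivity)
    (add_le_add_right (norm_sq_le_sum_sq y) 1) (by linarith)

lemma integrableOn_mul_one_add_sum_sub_sq_rpow_neg {S : Set (ι → ℝ)} (hS : MeasurableSet S)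
    {V : (ι → ℝ) → ℝ} (hV : AEStronglyMeasurable V (volume.restrict S)) {K b g : ℝ}
    (hVK : ∀ y ∈ S, |V y| ≤ K * (1 + ∑ i, y i ^ 2) ^ g)
    (hg : (Fintype.card ι : ℝ) / 2 < b - g) (x : ι → ℝ) :
    IntegrableOn (fun y => V y * (1 + ∑ i, (y i - x i) ^ 2) ^ (-b)) S := by
  have hint := (integrable_one_add_sum_sq_rpow_neg hg).const_mul
    (K * (2 * (1 + ∑ i, x i ^ 2)) ^ |(-b)|)
  refine hint.integrableOn.mono' (hV.mul (Measurable.aestronglyMeasurable (by fun_prop))) ?_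
  filter_upwards [ae_restrict_mem hS] with y hy
  have hcompare := rpow_le_rpow_abs_mul_rpow (by positivity) (by positivity) (by positivity)
    (one_add_sum_sub_sq_le x y) (one_add_sum_sq_le x y) (-b)
  calc ‖V y * (1 + ∑ i, (y i - x i) ^ 2) ^ (-b)‖
      = |V y| * (1 + ∑ i, (y i - x i) ^ 2) ^ (-b) := by
        rw [norm_mul, norm_eq_abs, norm_of_nonneg (by positivity)]
    _ ≤ K * (1 + ∑ i, y i ^ 2) ^ g *
        ((2 * (1 + ∑ i, x i ^ 2)) ^ |(-b)| * (1 + ∑ i, y i ^ 2) ^ (-b)) :=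
        mul_le_mul (hVK y hy) hcompare (by positivity) ((abs_nonneg _).trans (hVK y hy))
    _ = K * (2 * (1 + ∑ i, x i ^ 2)) ^ |(-b)| * (1 + ∑ i, y i ^ 2) ^ (-(b - g)) := by
        rw [neg_sub, sub_eq_add_neg g, rpow_add (by positivity)]
        ring

lemma abs_mul_prod_rpow_le (e : κ → ι) {a : κ → ℝ} (ha : ∀ j, 0 ≤ a j) {y : ι → ℝ}
    (hy : ∀ j, 0 ≤ y (e j)) {v K g : ℝ} (hv : |v| ≤ K * (1 + ∑ i, y i ^ 2) ^ g) :
    |v * ∏ j, y (e j) ^ (2 * a j)| ≤ K * (1 + ∑ i, y i ^ 2) ^ (g + ∑ j, a j) := by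
  have hprod : ∏ j, y (e j) ^ (2 * a j) ≤ (1 + ∑ i, y i ^ 2) ^ ∑ j, a j := by
    rw [rpow_sum_of_pos (by positivity)]
    refine Finset.prod_le_prod (fun j _ => rpow_nonneg (hy j) _) fun j _ => ?_
    rw [rpow_mul (hy j), rpow_two]
    refine rpow_le_rpow (sq_nonneg _) ?_ (ha j)
    linarith [Finset.single_le_sum (fun i _ => sq_nonneg (y i)) (Finset.mem_univ (e j))]
  have hprod0 : 0 ≤ ∏ j, y (e j) ^ (2 * a j) := Finset.prod_nonneg fun j _ => rpow_nonneg (hy j) _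
  rw [abs_mul, abs_of_nonneg hprod0, rpow_add (by positivity), ← mul_assoc]
  exact mul_le_mul hv hprod hprod0 ((abs_nonneg v).trans hv)

end PolynomialGrowth

section LauricellaKernel

/-- The face `{y | 0 < y_(e j) for all j}` of the region in which the coordinates selected by `e`
are positive. -/
def openFace {ι κ : Type*} (e : κ → ι) : Set (ι → ℝ) :=
  {y | ∀ j, 0 < y (e j)}

/-- The coefficients `4 y_(e j) x_(e j)`, minus the numerators of the arguments of the Lauricella
function in the kernel of the potential. -/
def faceCoeff {ι κ : Type*} (e : κ → ι) (x y : ι → ℝ) (j : κ) : ℝ :=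
  4 * y (e j) * x (e j)

lemma isOpen_openFace {ι κ : Type*} [Finite κ] (e : κ → ι) : IsOpen (openFace e) := by
  rw [openFace, Set.ofPred_forall]
  exact isOpen_iInter_of_finite fun j => isOpen_lt continuous_const (continuous_apply _)

lemma faceCoeff_pos {ι κ : Type*} {e : κ → ι} {x y : ι → ℝ} (hx : x ∈ openFace e)
    (hy : y ∈ openFace e) (j : κ) : 0 < faceCoeff e x y j :=
  mul_pos (mul_pos four_pos (hy j)) (hx j)

lemma continuous_faceCoeff {ι κ : Type*} (e : κ → ι) (x : ι → ℝ) : Continuous (faceCoeff e x) := by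
  unfold faceCoeff
  fun_prop

lemma openFace_prod_openUnitCube_mem_nhdsWithin {ι κ : Type*} [Finite κ] {e : κ → ι} {x : ι → ℝ}
    (hx : x ∈ openFace e) :
    openFace e ×ˢ openUnitCube κ ∈ 𝓝[Set.univ ×ˢ positiveOrthant κ] (x, 0) := by
  have hface : ∀ᶠ p in 𝓝 (x, (0 : κ → ℝ)), p.1 ∈ openFace e :=
    (continuous_fst.tendsto (x, (0 : κ → ℝ))).eventually ((isOpen_openFace e).mem_nhds hx)
  have hlt : ∀ᶠ p in 𝓝 (x, (0 : κ → ℝ)), ∀ j, p.2 j < 1 := eventually_all.2 fun j =>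
    (((continuous_apply j).comp continuous_snd).tendsto (x, (0 : κ → ℝ))).eventually_lt_const
      zero_lt_one
  filter_upwards [nhdsWithin_le_nhds hface, nhdsWithin_le_nhds hlt, self_mem_nhdsWithin]
    with p hp hlt hpos
  exact ⟨hp, fun j hj => ⟨hpos.2 j hj, hlt j⟩⟩

lemma continuousAt_powerWeight_one_sub {κ : Type*} [Fintype κ] (a : κ → ℝ) :
    ContinuousAt (fun u => powerWeight a (1 - u)) 0 :=
  tendsto_finsetProd _ fun j _ =>
    ((continuous_const.sub (continuous_apply j)).continuousAt (x := (0 : κ → ℝ))).rpow_const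
      (Or.inl (by simp))

lemma tendsto_mul_powerWeight_one_sub {ι κ : Type*} [Fintype κ] {V : (ι → ℝ) → ℝ} {x : ι → ℝ}
    (hVx : ContinuousAt V x) (a : κ → ℝ) :
    Tendsto (fun p : (ι → ℝ) × (κ → ℝ) => V p.1 * powerWeight a (1 - p.2)) (𝓝 (x, 0))
      (𝓝 (V x)) := by
  have h := (hVx.tendsto.comp (continuousAt_fst (p := (x, (0 : κ → ℝ))))).mul
    ((continuousAt_powerWeight_one_sub a).tendsto.comp (continuousAt_snd (p := (x, 0))))
  simpa [powerWeight] using h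

variable {ι κ : Type*} [Fintype ι] [Fintype κ] {e : κ → ι} {a c : κ → ℝ} {x y : ι → ℝ} {b s : ℝ}
  {V : (ι → ℝ) → ℝ}

/-- The kernel `(s² + |y - x|²)^(-b) F_A(b, a; c; -4 y x / (s² + |y - x|²))` of the potential, where
`x` and `y` are points of the face and `s` is the distance of the evaluation point from it. -/
noncomputable def lauricellaKernel (e : κ → ι) (b : ℝ) (a c : κ → ℝ) (x y : ι → ℝ) (s : ℝ) : ℝ :=
  (s ^ 2 + ∑ i, (y i - x i) ^ 2) ^ (-b) *
    lauricellaFA b a c fun j => -4 * y (e j) * x (e j) / (s ^ 2 + ∑ i, (y i - x i) ^ 2)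

lemma lauricellaKernel_eq_setIntegral (hx : x ∈ openFace e) (hy : y ∈ openFace e) (hs : 0 < s) :
    lauricellaKernel e b a c x y s = eulerConst a c *
      ∫ u in openUnitCube κ,
        eulerWeight a c u * (s ^ 2 + parabolicFormAt (faceCoeff e x) x (y, u)) ^ (-b) := by
  have hρ : 0 < s ^ 2 + ∑ i, (y i - x i) ^ 2 := by positivity
  have h := rpow_neg_mul_lauricellaFA_neg_div b a c (fun j => (faceCoeff_pos hx hy j).le) hρ
  simpa only [lauricellaKernel, faceCoeff, parabolicFormAt, parabolicForm, Pi.sub_apply, neg_mul,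
    add_assoc] using h

lemma parabolicFormAt_faceCoeff_nonneg (hx : x ∈ openFace e) {p : (ι → ℝ) × (κ → ℝ)}
    (hp : p ∈ openFace e ×ˢ openUnitCube κ) : 0 ≤ parabolicFormAt (faceCoeff e x) x p :=
  parabolicForm_nonneg (fun j => (faceCoeff_pos hx hp.1 j).le)
    fun j => (hp.2 j (Set.mem_univ j)).1.le

lemma ae_parabolicFormAt_faceCoeff_nonneg (hx : x ∈ openFace e) :
    ∀ᵐ p ∂(volume : Measure ((ι → ℝ) × (κ → ℝ))).restrict (openFace e ×ˢ openUnitCube κ),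
      0 ≤ parabolicFormAt (faceCoeff e x) x p :=
  ae_restrict_of_forall_mem ((isOpen_openFace e).measurableSet.prod measurableSet_openUnitCube)
    fun _ => parabolicFormAt_faceCoeff_nonneg hx

lemma measurable_parabolicFormAt_faceCoeff (e : κ → ι) (x : ι → ℝ) :
    Measurable (parabolicFormAt (faceCoeff e x) x) :=
  measurable_parabolicFormAt (continuous_faceCoeff e x).measurable x

lemma aestronglyMeasurable_mul_comp_snd (hV : AEStronglyMeasurable V (volume.restrict (openFace e)))
    {W : (κ → ℝ) → ℝ} (hW : Measurable W) :
    AEStronglyMeasurable (fun p : (ι → ℝ) × (κ → ℝ) => V p.1 * W p.2)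
      (volume.restrict (openFace e ×ˢ openUnitCube κ)) := by
  rw [Measure.volume_eq_prod, ← Measure.prod_restrict]
  exact hV.comp_fst.mul (hW.comp measurable_snd).aestronglyMeasurable

lemma measurable_eulerWeight (a c : κ → ℝ) : Measurable (eulerWeight a c) :=
  (measurable_powerWeight a).mul ((measurable_powerWeight (c - a)).comp (measurable_id.const_sub 1))

lemma integrableOn_mul_eulerWeight_mul_rpow_neg (ha : ∀ j, 0 < a j) (hac : ∀ j, a j < c j)
    (hb : 0 ≤ b) (hx : x ∈ openFace e) (hV : AEStronglyMeasurable V (volume.restrict (openFace e)))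
    (hint : IntegrableOn (fun y => V y * (1 + ∑ i, (y i - x i) ^ 2) ^ (-b)) (openFace e)) :
    IntegrableOn (fun p : (ι → ℝ) × (κ → ℝ) => V p.1 * eulerWeight a c p.2 *
      (1 + parabolicFormAt (faceCoeff e x) x p) ^ (-b)) (openFace e ×ˢ openUnitCube κ) := by
  have hprod : IntegrableOn (fun p : (ι → ℝ) × (κ → ℝ) =>
      V p.1 * (1 + ∑ i, (p.1 i - x i) ^ 2) ^ (-b) * eulerWeight a c p.2)
      (openFace e ×ˢ openUnitCube κ) := by
    rw [IntegrableOn, Measure.volume_eq_prod, ← Measure.prod_restrict]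
    exact hint.mul_prod (integrableOn_eulerWeight ha hac)
  refine hprod.norm.mono' (aestronglyMeasurable_mul_add_rpow
    (aestronglyMeasurable_mul_comp_snd hV (measurable_eulerWeight a c))
    (measurable_parabolicFormAt_faceCoeff e x) _ _) ?_
  filter_upwards [ae_restrict_mem
    ((isOpen_openFace e).measurableSet.prod measurableSet_openUnitCube)] with p hp
  have hle : ∑ i, (p.1 i - x i) ^ 2 ≤ parabolicFormAt (faceCoeff e x) x p :=
    sum_sub_sq_le_parabolicFormAt (fun j => (faceCoeff_pos hx hp.1 j).le)
      fun j => (hp.2 j (Set.mem_univ j)).1.le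
  have hpow : (1 + parabolicFormAt (faceCoeff e x) x p) ^ (-b) ≤
      (1 + ∑ i, (p.1 i - x i) ^ 2) ^ (-b) :=
    rpow_le_rpow_of_nonpos (by positivity) (by linarith) (neg_nonpos.2 hb)
  have hpow0 : 0 ≤ (1 + parabolicFormAt (faceCoeff e x) x p) ^ (-b) :=
    rpow_nonneg (by linarith [parabolicFormAt_faceCoeff_nonneg hx hp]) _
  rw [mul_right_comm (V p.1) (_ ^ _), norm_mul, norm_mul (V p.1 * _), norm_of_nonneg hpow0]
  gcongr
  exact hpow.trans (le_abs_self _)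

lemma setIntegral_mul_lauricellaKernel (hb : 0 ≤ b) (hx : x ∈ openFace e)
    (hV : AEStronglyMeasurable V (volume.restrict (openFace e)))
    (hint : IntegrableOn (fun p : (ι → ℝ) × (κ → ℝ) => V p.1 * eulerWeight a c p.2 *
      (1 + parabolicFormAt (faceCoeff e x) x p) ^ (-b)) (openFace e ×ˢ openUnitCube κ))
    (hs : 0 < s) :
    ∫ y in openFace e, V y * lauricellaKernel e b a c x y s =
      eulerConst a c * ∫ p in openFace e ×ˢ openUnitCube κ,
        V p.1 * eulerWeight a c p.2 * (s ^ 2 + parabolicFormAt (faceCoeff e x) x p) ^ (-b) := by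
  have hint' := integrable_mul_add_rpow
    (aestronglyMeasurable_mul_comp_snd hV (measurable_eulerWeight a c))
    (measurable_parabolicFormAt_faceCoeff e x) (ae_parabolicFormAt_faceCoeff_nonneg hx) hint
    (neg_nonpos.2 hb) le_rfl (pow_pos hs 2)
  rw [Measure.volume_eq_prod] at hint' ⊢
  rw [setIntegral_prod _ hint', ← integral_const_mul]
  refine setIntegral_congr_fun (isOpen_openFace e).measurableSet fun y hy => ?_
  simp only [lauricellaKernel_eq_setIntegral hx hy hs, mul_assoc, integral_const_mul]
  ring

lemma hasDerivAt_setIntegral_mul_lauricellaKernel (hb : 0 ≤ b) (hx : x ∈ openFace e)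
    (hV : AEStronglyMeasurable V (volume.restrict (openFace e)))
    (hint : IntegrableOn (fun p : (ι → ℝ) × (κ → ℝ) => V p.1 * eulerWeight a c p.2 *
      (1 + parabolicFormAt (faceCoeff e x) x p) ^ (-b)) (openFace e ×ˢ openUnitCube κ))
    (hs : 0 < s) :
    HasDerivAt (fun s => ∫ y in openFace e, V y * lauricellaKernel e b a c x y s)
      (eulerConst a c * (-2 * b * s * ∫ p in openFace e ×ˢ openUnitCube κ,
        V p.1 * eulerWeight a c p.2 * (s ^ 2 + parabolicFormAt (faceCoeff e x) x p) ^ (-b - 1)))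
      s := by
  refine ((hasDerivAt_integral_mul_sq_add_rpow_neg
    (aestronglyMeasurable_mul_comp_snd hV (measurable_eulerWeight a c))
    (measurable_parabolicFormAt_faceCoeff e x) (ae_parabolicFormAt_faceCoeff_nonneg hx) hint hb
    hs).const_mul _).congr_of_eventuallyEq ?_
  filter_upwards [Ioi_mem_nhds hs] with t ht
  exact setIntegral_mul_lauricellaKernel hb hx hV hint ht

lemma min_le_parabolicFormAt_faceCoeff {ρ : ℝ} (hρ : 0 < ρ) (hxρ : ∀ j, 2 * ρ ≤ x (e j))
    {p : (ι → ℝ) × (κ → ℝ)} (hp : p ∈ openFace e ×ˢ openUnitCube κ)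
    (hball : p ∉ Metric.ball (x, (0 : κ → ℝ)) ρ) :
    min (ρ ^ 2) (8 * ρ ^ 3) ≤ parabolicFormAt (faceCoeff e x) x p := by
  have hu : ∀ j, 0 < p.2 j := fun j => (hp.2 j (Set.mem_univ j)).1
  have hq : ∀ j, 0 < faceCoeff e x p.1 j :=
    faceCoeff_pos (fun j => (mul_pos two_pos hρ).trans_le (hxρ j)) hp.1
  have hsum : ∑ j, faceCoeff e x p.1 j * p.2 j ≤ parabolicFormAt (faceCoeff e x) x p :=
    le_add_of_nonneg_left (Finset.sum_nonneg fun i _ => sq_nonneg _)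
  by_cases hfar : ∃ i, ρ ≤ |p.1 i - x i|
  · obtain ⟨i, hi⟩ := hfar
    calc min (ρ ^ 2) (8 * ρ ^ 3) ≤ |p.1 i - x i| ^ 2 := (min_le_left _ _).trans (by gcongr)
      _ = (p.1 i - x i) ^ 2 := sq_abs _
      _ ≤ ∑ i, (p.1 i - x i) ^ 2 :=
        Finset.single_le_sum (fun i _ => sq_nonneg (p.1 i - x i)) (Finset.mem_univ i)
      _ ≤ _ := sum_sub_sq_le_parabolicFormAt (fun j => (hq j).le) fun j => (hu j).le
  · push Not at hfar
    obtain ⟨j, hj⟩ : ∃ j, ρ ≤ p.2 j := by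
      by_contra! hnear
      refine hball (max_lt ((dist_pi_lt_iff hρ).2 hfar) ((dist_pi_lt_iff hρ).2 fun j => ?_))
      simpa [dist_eq, abs_of_pos (hu j)] using hnear j
    have hy : ρ ≤ p.1 (e j) := by linarith [hxρ j, (abs_lt.1 (hfar (e j))).1]
    calc min (ρ ^ 2) (8 * ρ ^ 3) ≤ 4 * ρ * (2 * ρ) * ρ := (min_le_right _ _).trans (by linarith)
      _ ≤ faceCoeff e x p.1 j * p.2 j := by
        have hx0 : 0 < x (e j) := (mul_pos two_pos hρ).trans_le (hxρ j)
        have hy0 : 0 < p.1 (e j) := hp.1 j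
        unfold faceCoeff
        gcongr
        exact hxρ j
      _ ≤ ∑ j, faceCoeff e x p.1 j * p.2 j :=
        Finset.single_le_sum (fun j _ => (mul_pos (hq j) (hu j)).le) (Finset.mem_univ j)
      _ ≤ _ := hsum

lemma exists_pos_forall_le_parabolicFormAt_faceCoeff (hx : x ∈ openFace e)
    {O : Set ((ι → ℝ) × (κ → ℝ))} (hO : O ∈ 𝓝 (x, 0)) :
    ∃ η > 0, ∀ p ∈ (openFace e ×ˢ openUnitCube κ) \ O,
      η ≤ parabolicFormAt (faceCoeff e x) x p := by
  obtain ⟨δ, hδ, hball⟩ := Metric.mem_nhds_iff.1 hO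
  have hxρ : ∀ᶠ ρ in 𝓝[>] (0 : ℝ), ∀ j, 2 * ρ ≤ x (e j) := by
    refine eventually_all.2 fun j => ?_
    filter_upwards [Ioo_mem_nhdsGT (half_pos (hx j))] with ρ hρ
    linarith [hρ.2]
  obtain ⟨ρ, hρx, hρ, hρδ⟩ := (hxρ.and (Ioo_mem_nhdsGT hδ)).exists
  exact ⟨min (ρ ^ 2) (8 * ρ ^ 3), by positivity, fun p hp =>
    min_le_parabolicFormAt_faceCoeff hρ hρx hp.1
      fun hmem => hp.2 (hball (Metric.ball_subset_ball hρδ.le hmem))⟩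

lemma tendsto_rpow_mul_setIntegral_mul_eulerWeight {r : ℝ} (ha : ∀ j, 0 < a j)
    (hr : (Fintype.card ι : ℝ) / 2 + ∑ j, a j < r) (hbr : b ≤ r) (hx : x ∈ openFace e)
    (hV : AEStronglyMeasurable V (volume.restrict (openFace e))) (hVx : ContinuousAt V x)
    (hint : IntegrableOn (fun p : (ι → ℝ) × (κ → ℝ) => V p.1 * eulerWeight a c p.2 *
      (1 + parabolicFormAt (faceCoeff e x) x p) ^ (-b)) (openFace e ×ˢ openUnitCube κ)) :
    Tendsto (fun s : ℝ => s ^ (2 * r - Fintype.card ι - 2 * ∑ j, a j) *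
        ∫ p in openFace e ×ˢ openUnitCube κ,
          V p.1 * eulerWeight a c p.2 * (s ^ 2 + parabolicFormAt (faceCoeff e x) x p) ^ (-r))
      (𝓝[>] 0)
      (𝓝 (V x * (π ^ ((Fintype.card ι : ℝ) / 2) *
        (∏ j, faceCoeff e x x j ^ (-a j) * Gamma (a j)) *
        (Gamma (r - ((Fintype.card ι : ℝ) / 2 + ∑ j, a j)) / Gamma r)))) := by
  have hsplit : ∀ p : (ι → ℝ) × (κ → ℝ), V p.1 * eulerWeight a c p.2 =
      V p.1 * powerWeight (c - a) (1 - p.2) * powerWeight a p.2 := fun p => by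
    rw [eulerWeight]
    ring
  simp_rw [hsplit] at hint ⊢
  exact tendsto_rpow_mul_setIntegral_sq_add_parabolicFormAt ha hr hbr
    (continuous_faceCoeff e x).measurable (continuous_faceCoeff e x).continuousAt
    (faceCoeff_pos hx hx) ((isOpen_openFace e).measurableSet.prod measurableSet_openUnitCube)
    (fun p hp => ⟨Set.mem_univ _, fun j hj => (hp.2 j hj).1⟩)
    (openFace_prod_openUnitCube_mem_nhdsWithin hx)
    (aestronglyMeasurable_mul_comp_snd hV
      ((measurable_powerWeight (c - a)).comp (measurable_id.const_sub 1)))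
    ((tendsto_mul_powerWeight_one_sub hVx _).mono_left nhdsWithin_le_nhds)
    (fun O hO => exists_pos_forall_le_parabolicFormAt_faceCoeff hx hO) hint
    (fun p hp => parabolicFormAt_faceCoeff_nonneg hx hp)

theorem tendsto_rpow_mul_deriv_setIntegral_mul_lauricellaKernel (ha : ∀ j, 0 < a j)
    (hac : ∀ j, a j < c j) (hb : 0 ≤ b) (hab : (Fintype.card ι : ℝ) / 2 + ∑ j, a j < b + 1)
    (hx : x ∈ openFace e) (hV : AEStronglyMeasurable V (volume.restrict (openFace e)))
    (hVx : ContinuousAt V x)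
    (hint : IntegrableOn (fun y => V y * (1 + ∑ i, (y i - x i) ^ 2) ^ (-b)) (openFace e)) :
    Tendsto (fun s : ℝ => s ^ (2 * b + 1 - Fintype.card ι - 2 * ∑ j, a j) *
        deriv (fun s => ∫ y in openFace e, V y * lauricellaKernel e b a c x y s) s) (𝓝[>] 0)
      (𝓝 (-2 * b * eulerConst a c * (V x * (π ^ ((Fintype.card ι : ℝ) / 2) *
        (∏ j, faceCoeff e x x j ^ (-a j) * Gamma (a j)) *
        (Gamma (b + 1 - ((Fintype.card ι : ℝ) / 2 + ∑ j, a j)) / Gamma (b + 1)))))) := by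
  have hint' := integrableOn_mul_eulerWeight_mul_rpow_neg (c := c) ha hac hb hx hV hint
  refine ((tendsto_rpow_mul_setIntegral_mul_eulerWeight ha hab (by linarith) hx hV hVx
    hint').const_mul (-2 * b * eulerConst a c)).congr' ?_
  filter_upwards [self_mem_nhdsWithin] with s (hs : 0 < s)
  have hpow : s ^ (2 * (b + 1) - Fintype.card ι - 2 * ∑ j, a j) =
      s ^ (2 * b + 1 - Fintype.card ι - 2 * ∑ j, a j) * s := by
    rw [← rpow_add_one hs.ne']
    ring_nf
  rw [(hasDerivAt_setIntegral_mul_lauricellaKernel hb hx hV hint' hs).deriv, hpow, neg_add' b]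
  ring

end LauricellaKernel

section Normalization

/-- The normalizing constant `γ` of the potential in dimension `d`, with exponent `b`: the weight of
the coordinate normal to the face is `a₀`, and those of the other singular coordinates are `a`. -/
noncomputable def potentialConst {κ : Type*} [Fintype κ] (d b a₀ : ℝ) (a : κ → ℝ) : ℝ :=
  2 ^ (2 * b - d) * Gamma b / π ^ (d / 2) *
    (Gamma a₀ / Gamma (2 * a₀) * ∏ j, Gamma (a j) / Gamma (2 * a j))

lemma faceCoeff_self_rpow_neg_mul_rpow {ι κ : Type*} {e : κ → ι} {x : ι → ℝ} (a : κ → ℝ)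
    (hx : x ∈ openFace e) (j : κ) :
    faceCoeff e x x j ^ (-a j) * x (e j) ^ (2 * a j) = 2 ^ (-2 * a j) := by
  have hxj : 0 < x (e j) := hx j
  have hsq : faceCoeff e x x j = (2 * x (e j)) ^ (2 : ℝ) := by
    rw [faceCoeff, rpow_two]
    ring
  rw [hsq, ← rpow_mul (by positivity), mul_neg, mul_rpow zero_le_two hxj.le, mul_assoc,
    ← rpow_add hxj, neg_add_cancel, rpow_zero, mul_one, neg_mul]

lemma eulerConst_mul_prod_faceCoeff_self {ι κ : Type*} [Fintype κ] {e : κ → ι} {a : κ → ℝ}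
    {x : ι → ℝ} (ha : ∀ j, 0 < a j) (hx : x ∈ openFace e) :
    eulerConst a (fun j => 2 * a j) * (∏ j, x (e j) ^ (2 * a j)) *
        (∏ j, faceCoeff e x x j ^ (-a j) * Gamma (a j)) * ∏ j, Gamma (a j) / Gamma (2 * a j) =
      2 ^ (-2 * ∑ j, a j) := by
  rw [eulerConst, ← Finset.prod_mul_distrib, ← Finset.prod_mul_distrib, ← Finset.prod_mul_distrib,
    Finset.mul_sum, rpow_sum_of_pos two_pos]
  refine Finset.prod_congr rfl fun j _ => ?_
  have hΓa := Gamma_pos_of_pos (ha j)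
  have hΓ2a := Gamma_pos_of_pos (mul_pos two_pos (ha j))
  rw [← faceCoeff_self_rpow_neg_mul_rpow a hx, two_mul (a j), add_sub_cancel_right, ← two_mul]
  field_simp

lemma Gamma_div_Gamma_two_mul_mul_Gamma_add_half {a₀ : ℝ} (ha₀ : 0 < a₀) :
    Gamma a₀ / Gamma (2 * a₀) * Gamma (a₀ + 1 / 2) = 2 ^ (1 - 2 * a₀) * √π := by
  rw [div_mul_eq_mul_div, Gamma_mul_Gamma_add_half, mul_assoc,
    mul_div_cancel_left₀ _ (Gamma_pos_of_pos (mul_pos two_pos ha₀)).ne']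

variable {ι κ : Type*} [Fintype ι] [Fintype κ] {e : κ → ι} {a : κ → ℝ} {x : ι → ℝ} {a₀ b : ℝ}

lemma two_mul_potentialConst_mul_eq_one (ha : ∀ j, 0 < a j) (ha₀ : 0 < a₀) (hb0 : 0 < b)
    (hb : b = ((Fintype.card ι : ℝ) - 1) / 2 + ∑ j, a j + a₀) (hx : x ∈ openFace e) :
    2 * b * potentialConst (Fintype.card ι + 1) b a₀ a * eulerConst a (fun j => 2 * a j) *
      ((∏ j, x (e j) ^ (2 * a j)) * (π ^ ((Fintype.card ι : ℝ) / 2) *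
        (∏ j, faceCoeff e x x j ^ (-a j) * Gamma (a j)) *
        (Gamma (a₀ + 1 / 2) / Gamma (b + 1)))) = 1 := by
  have hpi : π ^ (((Fintype.card ι : ℝ) + 1) / 2) = π ^ ((Fintype.card ι : ℝ) / 2) * √π := by
    rw [sqrt_eq_rpow, ← rpow_add pi_pos, add_div]
  have htwo : (2 : ℝ) ^ (2 * b - (Fintype.card ι + 1)) * 2 ^ (1 - 2 * a₀) * 2 ^ (-2 * ∑ j, a j) =
      2⁻¹ := by
    have hexp : 2 * b - (Fintype.card ι + 1) + (1 - 2 * a₀) + -2 * ∑ j, a j = -1 := by linarith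
    rw [← rpow_add two_pos, ← rpow_add two_pos, hexp, rpow_neg_one]
  have hΓb : Gamma b ≠ 0 := (Gamma_pos_of_pos hb0).ne'
  calc _ = 2 * (2 ^ (2 * b - (Fintype.card ι + 1)) *
        (Gamma a₀ / Gamma (2 * a₀) * Gamma (a₀ + 1 / 2) / √π) *
        (eulerConst a (fun j => 2 * a j) * (∏ j, x (e j) ^ (2 * a j)) *
          (∏ j, faceCoeff e x x j ^ (-a j) * Gamma (a j)) *
          ∏ j, Gamma (a j) / Gamma (2 * a j))) := by
        rw [potentialConst, hpi, Gamma_add_one hb0.ne']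
        field_simp [hΓb]
    _ = 2 * 2⁻¹ := by
        rw [Gamma_div_Gamma_two_mul_mul_Gamma_add_half ha₀,
          eulerConst_mul_prod_faceCoeff_self ha hx,
          mul_div_cancel_right₀ _ (sqrt_pos.2 pi_pos).ne', htwo]
    _ = 1 := mul_inv_cancel₀ two_ne_zero

theorem tendsto_rpow_mul_deriv_potential {ν : (ι → ℝ) → ℝ} {K ε : ℝ} (ha : ∀ j, 0 < a j)
    (ha₀ : 0 < a₀) (hb0 : 0 < b) (hb : b = ((Fintype.card ι : ℝ) - 1) / 2 + ∑ j, a j + a₀)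
    (hx : x ∈ openFace e) (hε : 0 < ε)
    (hν : AEStronglyMeasurable ν (volume.restrict (openFace e))) (hνx : ContinuousAt ν x)
    (hνbd : ∀ y ∈ openFace e, |ν y| ≤ K * (1 + ∑ i, y i ^ 2) ^ (-(1 - 2 * a₀ + ε) / 2)) :
    Tendsto (fun t : ℝ => t ^ (2 * a₀) * deriv (fun s =>
        -potentialConst (Fintype.card ι + 1) b a₀ a * ∫ y in openFace e,
          ν y * (∏ j, y (e j) ^ (2 * a j)) * lauricellaKernel e b a (fun j => 2 * a j) x y s) t)
      (𝓝[>] 0) (𝓝 (ν x)) := by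
  have hweight : ContinuousAt (fun y : ι → ℝ => ∏ j, y (e j) ^ (2 * a j)) x :=
    tendsto_finsetProd _ fun j _ =>
      (continuous_apply (e j)).continuousAt.rpow_const (Or.inl (hx j).ne')
  have hV : AEStronglyMeasurable (fun y => ν y * ∏ j, y (e j) ^ (2 * a j))
      (volume.restrict (openFace e)) :=
    hν.mul (Measurable.aestronglyMeasurable (by fun_prop))
  have hint := integrableOn_mul_one_add_sum_sub_sq_rpow_neg (b := b)
    (isOpen_openFace e).measurableSet hV
    (fun y hy => abs_mul_prod_rpow_le e (fun j => (ha j).le) (fun j => (hy j).le) (hνbd y hy))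
    (by linarith) x
  have h := (tendsto_rpow_mul_deriv_setIntegral_mul_lauricellaKernel (c := fun j => 2 * a j) ha
    (fun j => by linarith [ha j]) hb0.le (by linarith) hx hV (hνx.mul hweight) hint).const_mul
    (-potentialConst (Fintype.card ι + 1) b a₀ a)
  have hexp : 2 * b + 1 - Fintype.card ι - 2 * ∑ j, a j = 2 * a₀ := by linarith
  have hgap : b + 1 - ((Fintype.card ι : ℝ) / 2 + ∑ j, a j) = a₀ + 1 / 2 := by linarith
  rw [hexp, hgap] at h
  have hlim := congrArg (ν x * ·) (two_mul_potentialConst_mul_eq_one ha ha₀ hb0 hb hx)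
  refine (h.congr fun t => ?_).trans_eq (congrArg 𝓝 ?_)
  · rw [deriv_const_mul_field, mul_left_comm]
  · linear_combination hlim

end Normalization

@[to_additive]
lemma prod_filter_eq_mul_prod_subtype_ne {ι M : Type*} [Fintype ι] [DecidableEq ι] [CommMonoid M]
    (p : ι → Prop) [DecidablePred p] {k : ι} (hk : p k) (f : ι → M) :
    ∏ j with p j, f j = f k * ∏ j : {j // p j ∧ j ≠ k}, f j := by
  rw [← Finset.mul_prod_erase _ f (Finset.mem_filter_univ k |>.2 hk)]
  exact congrArg _ (Finset.prod_subtype _ (by simp [and_comm]) f)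

lemma setOf_forall_pos_eq_openFace {ι : Type*} (p : ι → Prop) (k : ι) :
    {y : {i // i ≠ k} → ℝ | ∀ i, p i.1 → 0 < y i} =
      openFace fun j : {j // p j ∧ j ≠ k} => ⟨j.1, j.2.2⟩ :=
  Set.ext fun _ => ⟨fun h j => h _ j.2.1, fun h i hi => h ⟨i.1, hi, i.2⟩⟩

lemma cast_card_subtype_ne {ι : Type*} [Fintype ι] [DecidableEq ι] (k : ι) :
    (Fintype.card {i // i ≠ k} : ℝ) = Fintype.card ι - 1 := by
  rw [Fintype.card_subtype_compl, Fintype.card_subtype_eq,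
    Nat.cast_sub (Fintype.card_pos_iff.2 ⟨k⟩), Nat.cast_one]

theorem potential_boundary_condition_same_index_general (m n : ℕ) (hm : 2 ≤ m) (α : Fin m → ℝ)
    (hα : ∀ j : Fin m, (j : ℕ) < n → 0 < α j) (β γ : ℝ)
    (hβ : β = ((m : ℝ) - 2) / 2 + ∑ j ∈ Finset.univ.filter fun j : Fin m => (j : ℕ) < n, α j)
    (hγ : γ = 2 ^ (2 * β - (m : ℝ)) * Gamma β / π ^ ((m : ℝ) / 2) *
      ∏ j ∈ Finset.univ.filter fun j : Fin m => (j : ℕ) < n, Gamma (α j) / Gamma (2 * α j))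
    (k : Fin m) (hk : (k : ℕ) < n) (ν : ({i : Fin m // i ≠ k} → ℝ) → ℝ) (c ε : ℝ) (hε : 0 < ε)
    (hνmeas : AEStronglyMeasurable ν
      (volume.restrict {y | ∀ i : {i : Fin m // i ≠ k}, (i.1 : ℕ) < n → 0 < y i}))
    (hνbd : ∀ y : {i : Fin m // i ≠ k} → ℝ, (∀ i, (i.1 : ℕ) < n → 0 < y i) →
      |ν y| ≤ c * (1 + ∑ i, y i ^ 2) ^ (-(1 - 2 * α k + ε) / 2))
    (I : (Fin m → ℝ) → ℝ)
    (hI : ∀ ξ : Fin m → ℝ, I ξ = -γ *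
      ∫ y in {y : {i : Fin m // i ≠ k} → ℝ | ∀ i, (i.1 : ℕ) < n → 0 < y i},
        ν y * (∏ j : {j : Fin m // (j : ℕ) < n ∧ j ≠ k}, y ⟨j.1, j.2.2⟩ ^ (2 * α j.1)) *
          (ξ k ^ 2 + ∑ i, (y i - ξ i.1) ^ 2) ^ (-β) *
          lauricellaFA β (fun j : {j : Fin m // (j : ℕ) < n ∧ j ≠ k} => α j.1)
            (fun j => 2 * α j.1)
            (fun j => -4 * y ⟨j.1, j.2.2⟩ * ξ j.1 / (ξ k ^ 2 + ∑ i, (y i - ξ i.1) ^ 2)))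
    (ξ : Fin m → ℝ) (hξ : ∀ i : Fin m, (i : ℕ) < n → i ≠ k → 0 < ξ i)
    (hνξ : ContinuousAt ν fun i => ξ i.1) :
    Tendsto (fun t : ℝ => t ^ (2 * α k) * deriv (fun s : ℝ => I (Function.update ξ k s)) t)
      (𝓝[>] 0) (𝓝 (ν fun i => ξ i.1)) := by
  have hface := setOf_forall_pos_eq_openFace (fun j : Fin m => (j : ℕ) < n) k
  have hcard : (Fintype.card {i : Fin m // i ≠ k} : ℝ) = m - 1 := by
    rw [cast_card_subtype_ne, Fintype.card_fin]
  rw [sum_filter_eq_add_sum_subtype_ne (fun j : Fin m => (j : ℕ) < n) hk] at hβ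
  have hβ0 : 0 < β := by
    have hm' : (2 : ℝ) ≤ m := by exact_mod_cast hm
    have hsum : 0 ≤ ∑ j : {j : Fin m // (j : ℕ) < n ∧ j ≠ k}, α j.1 :=
      Finset.sum_nonneg fun j _ => (hα j.1 j.2.1).le
    linarith [hα k hk]
  have h := tendsto_rpow_mul_deriv_potential
    (e := fun j : {j : Fin m // (j : ℕ) < n ∧ j ≠ k} => (⟨j.1, j.2.2⟩ : {i : Fin m // i ≠ k}))
    (a := fun j => α j.1) (x := fun i => ξ i.1) (fun j => hα j.1 j.2.1) (hα k hk) hβ0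
    (by rw [hcard, hβ]; ring) (fun j => hξ j.1 j.2.1 j.2.2) hε (hface ▸ hνmeas) hνξ
    fun y hy => hνbd y (hface.symm.le hy)
  refine h.congr fun t => ?_
  congr 2 with s
  have hupdate : ∀ j : {j : Fin m // (j : ℕ) < n ∧ j ≠ k}, Function.update ξ k s j.1 = ξ j.1 :=
    fun j => Function.update_of_ne j.2.2 _ _
  have hupdate' : ∀ i : {i : Fin m // i ≠ k}, Function.update ξ k s i.1 = ξ i.1 :=
    fun i => Function.update_of_ne i.2 _ _
  rw [hI, hface, hγ, prod_filter_eq_mul_prod_subtype_ne (fun j : Fin m => (j : ℕ) < n) hk, hcard,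
    sub_add_cancel]
  simp only [potentialConst, lauricellaKernel, mul_assoc, Function.update_self, hupdate, hupdate']

/-- The single-layer potential `I_k` fulfils the weighted Neumann boundary condition on
its own face: `lim_{ξ_k→0⁺} ξ_k^{2α_k} ∂I_k/∂ξ_k = ν_k(ξ̃_k)`. -/
theorem potential_boundary_condition_same_index (m n : ℕ) (hm : 2 < m) (hn : 1 ≤ n)
    (hnm : n ≤ m) (α : Fin m → ℝ)
    (hα : ∀ j : Fin m, (j : ℕ) < n → 0 < 2 * α j ∧ 2 * α j < 1)
    (β γ : ℝ)
    (hβ : β = ((m : ℝ) - 2) / 2 + ∑ j ∈ Finset.univ.filter fun j : Fin m => (j : ℕ) < n, α j)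
    (hγ : γ = 2 ^ (2 * β - (m : ℝ)) * Real.Gamma β / Real.pi ^ ((m : ℝ) / 2) *
      ∏ j ∈ Finset.univ.filter fun j : Fin m => (j : ℕ) < n,
        Real.Gamma (α j) / Real.Gamma (2 * α j))
    (k : Fin m) (hk : (k : ℕ) < n)
    (ν : ({i : Fin m // i ≠ k} → ℝ) → ℝ) (c ε : ℝ) (hc : 0 < c) (hε : 0 < ε)
    (hνcont : ContinuousOn ν {y | ∀ i : {i : Fin m // i ≠ k}, (i.1 : ℕ) < n → 0 < y i})
    (hνbd : ∀ y : {i : Fin m // i ≠ k} → ℝ, (∀ i, (i.1 : ℕ) < n → 0 < y i) →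
      |ν y| ≤ c * (1 + ∑ i, y i ^ 2) ^ (-(1 - 2 * α k + ε) / 2))
    (I : (Fin m → ℝ) → ℝ)
    (hI : ∀ ξ : Fin m → ℝ, I ξ = -γ *
      ∫ y in {y : {i : Fin m // i ≠ k} → ℝ | ∀ i, (i.1 : ℕ) < n → 0 < y i},
        ν y * (∏ j : {j : Fin m // (j : ℕ) < n ∧ j ≠ k}, y ⟨j.1, j.2.2⟩ ^ (2 * α j.1)) *
          (ξ k ^ 2 + ∑ i, (y i - ξ i.1) ^ 2) ^ (-β) *
          lauricellaFA β (fun j : {j : Fin m // (j : ℕ) < n ∧ j ≠ k} => α j.1)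
            (fun j => 2 * α j.1)
            (fun j => -4 * y ⟨j.1, j.2.2⟩ * ξ j.1 / (ξ k ^ 2 + ∑ i, (y i - ξ i.1) ^ 2)))
    (ξ : Fin m → ℝ) (hξ : ∀ i : Fin m, (i : ℕ) < n → i ≠ k → 0 < ξ i) :
    Filter.Tendsto
      (fun t : ℝ => t ^ (2 * α k) * deriv (fun s : ℝ => I (Function.update ξ k s)) t)
      (nhdsWithin 0 (Set.Ioi 0)) (nhds (ν fun i => ξ i.1)) := by
  have hS : IsOpen {y : {i : Fin m // i ≠ k} → ℝ | ∀ i, (i.1 : ℕ) < n → 0 < y i} :=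
    setOf_forall_pos_eq_openFace (fun j : Fin m => (j : ℕ) < n) k ▸ isOpen_openFace _
  exact potential_boundary_condition_same_index_general m n hm.le α
    (fun j hj => by linarith [hα j hj]) β γ hβ hγ k hk ν c ε hε
    (hνcont.aestronglyMeasurable hS.measurableSet) hνbd I hI ξ hξ
    (hνcont.continuousAt (hS.mem_nhds fun i hi => hξ i.1 hi i.2))
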